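/- arXiv:2509.09945 — 2 statements merged into one kernel-verified Lean document; each statement's English description precedes it below -/
import Mathlib

section
/- Let α ∈ [0,1] be irrational and let 0 < δ ≤ ∞. Then for every s with 0 < s ≤ 1, the ω_s-Hausdorff measure of the exact resonance level set D(δ) is infinite: ℋ^{ω_s}(D(δ)) = ∞. -/
open Filter MeasureTheory Set
open scoped ENNReal NNReal Classical

/-- Distance from `x : ℝ` to the nearest integer, i.e. `‖x‖_{ℝ/ℤ}`. -/
noncomputable def distZ (x : ℝ) : ℝ := |x - round x|

/-- The `ω`-Hausdorff measure of a set `S ⊆ ℝ`: the limit as `ε → 0⁺` (equivalently the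
supremum over `ε > 0`, by monotonicity) of the infimum of `∑ᵢ ω (bᵢ - aᵢ)` over countable
covers of `S` by intervals `(aᵢ, bᵢ)` of length at most `ε`. -/
noncomputable def gaugeHaus (ω : ℝ → ℝ) (S : Set ℝ) : ℝ≥0∞ :=
  ⨆ (ε : ℝ) (_ : 0 < ε),
    ⨅ (a : ℕ → ℝ) (b : ℕ → ℝ) (_ : S ⊆ ⋃ i, Set.Ioo (a i) (b i))
      (_ : ∀ i, a i ≤ b i ∧ b i - a i ≤ ε),
      ∑' i, ENNReal.ofReal (ω (b i - a i))

/-- The gauge function `ω_s(r) = (-log r)^{-s}` for `0 < r < 1`, and `ω_s(0) = 0`. -/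
noncomputable def omegaS (s : ℝ) (r : ℝ) : ℝ := if 0 < r then (-Real.log r) ^ (-s) else 0

/-- The resonance strength `δ(α, x) = limsup_{|k| → ∞} (-log ‖x - kα‖_{ℝ/ℤ}) / |k|`,
with the convention that it is `∞` when `x ≡ kα (mod ℤ)` for some `k ∈ ℤ`. -/

noncomputable def resStrength (α x : ℝ) : ℝ≥0∞ :=
  if ∃ k m : ℤ, x = (k : ℝ) * α + (m : ℝ) then ⊤
  else Filter.limsup
    (fun k : ℤ => ENNReal.ofReal (-Real.log (distZ (x - (k : ℝ) * α)) / |(k : ℝ)|))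
    Filter.cofinite

/-- The exact resonance level set `D(δ) = {x ∈ [0,1] : δ(α,x) = δ}`. -/
noncomputable def resSet (α : ℝ) (δ : ℝ≥0∞) : Set ℝ :=
  {x ∈ Set.Icc (0 : ℝ) 1 | resStrength α x = δ}

lemma distZ_nonneg (x : ℝ) : 0 ≤ distZ x := abs_nonneg _

lemma distZ_le_abs_sub_int (x : ℝ) (n : ℤ) : distZ x ≤ |x - n| := round_le x n

lemma distZ_le_abs (x : ℝ) : distZ x ≤ |x| := by
  simpa using distZ_le_abs_sub_int x 0

lemma distZ_add_int (x : ℝ) (n : ℤ) : distZ (x + n) = distZ x := by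
  simp [distZ, round_add_intCast]

lemma distZ_neg (x : ℝ) : distZ (-x) = distZ x := by
  apply le_antisymm
  · have h := distZ_le_abs_sub_int (-x) (-round x)
    have e : |(-x) - ((-round x : ℤ) : ℝ)| = distZ x := by
      rw [distZ, ← abs_neg]; congr 1; push_cast; ring
    rwa [e] at h
  · have h := distZ_le_abs_sub_int x (-round (-x))
    have e : |x - ((-round (-x) : ℤ) : ℝ)| = distZ (-x) := by
      rw [distZ, ← abs_neg]; congr 1; push_cast; ring
    rwa [e] at h

lemma distZ_sub_comm (x y : ℝ) : distZ (x - y) = distZ (y - x) := by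
  rw [← distZ_neg, neg_sub]

lemma distZ_add_le (x y : ℝ) : distZ (x + y) ≤ distZ x + distZ y := by
  have h := distZ_le_abs_sub_int (x + y) (round x + round y)
  have h2 := abs_add_le (x - round x) (y - round y)
  have e : x + y - ((round x + round y : ℤ) : ℝ) = (x - round x) + (y - round y) := by
    push_cast; ring
  rw [e] at h
  exact h.trans h2

lemma distZ_sub_le (x y z : ℝ) : distZ (x - z) ≤ distZ (x - y) + distZ (y - z) := by
  simpa using distZ_add_le (x - y) (y - z)

/-- If `x` is at distance at least `w` from the integers, then `x - 1/2` is at distance at most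
`1/2 - w` from the integers. -/
lemma distZ_sub_half_le {x w : ℝ} (h : w ≤ distZ x) : distZ (x - 1 / 2) ≤ 1 / 2 - w := by
  have h2 := abs_sub_round x
  unfold distZ at h
  rcases le_total 0 (x - round x) with h0 | h0
  · rw [abs_of_nonneg h0] at h h2
    refine (distZ_le_abs_sub_int _ (round x)).trans ?_
    rw [abs_le]; constructor <;> linarith
  · rw [abs_of_nonpos h0] at h h2
    refine (distZ_le_abs_sub_int _ (round x - 1)).trans ?_
    push_cast
    rw [abs_le]; constructor <;> linarith

/-- `q` is the denominator of a reduced fraction `p / q` with `|α - p / q| ≤ 1 / q ^ 2`. -/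
def IsApproxDen (α : ℝ) (q : ℕ) : Prop :=
  0 < q ∧ ∃ p : ℤ, IsCoprime p (q : ℤ) ∧ |α * q - p| * q ≤ 1

lemma exists_isApproxDen_ge {α : ℝ} (hα : Irrational α) (Q : ℕ) :
    ∃ q, Q ≤ q ∧ IsApproxDen α q := by
  have hinf := Real.infinite_rat_abs_sub_lt_one_div_den_sq_of_irrational hα
  by_contra! hcon
  apply hinf
  have hsub : {r : ℚ | |α - r| < 1 / (r.den : ℝ) ^ 2} ⊆
      (fun x : ℤ × ℕ => (x.1 / x.2 : ℚ)) ''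
        (Set.Icc (-(⌈(|α| + 1) * Q⌉ : ℤ)) ⌈(|α| + 1) * Q⌉ ×ˢ Set.Iic Q) := by
    intro r hr
    have hr : |α - r| < 1 / (r.den : ℝ) ^ 2 := hr
    have hd : (0 : ℝ) < r.den := by exact_mod_cast r.den_pos
    have hd1 : (1 : ℝ) ≤ r.den := by exact_mod_cast r.den_pos
    have hr' : (r : ℝ) = r.num / r.den := Rat.cast_def r
    have hQ : r.den ≤ Q := by
      by_contra! hlt
      refine hcon r.den hlt.le ⟨r.den_pos, r.num, ?_, ?_⟩
      · rw [Int.isCoprime_iff_gcd_eq_one]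
        have := r.reduced
        simpa [Int.gcd] using this
      · have e : α * r.den - r.num = (α - r) * r.den := by rw [hr']; field_simp
        rw [e, abs_mul, abs_of_pos hd]
        rw [lt_div_iff₀ (by positivity)] at hr
        nlinarith
    refine ⟨(r.num, r.den), ⟨?_, hQ⟩, Rat.num_div_den r⟩
    have h1 : |(r : ℝ)| ≤ |α| + 1 := by
      have : 1 / (r.den : ℝ) ^ 2 ≤ 1 := by
        rw [div_le_one (by positivity)]; exact one_le_pow₀ hd1
      have h3 := abs_sub_abs_le_abs_sub (r : ℝ) α
      rw [abs_sub_comm] at h3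
      linarith
    have h2 : |(r.num : ℝ)| ≤ (|α| + 1) * Q := by
      have e : (r.num : ℝ) = r * r.den := by rw [hr']; field_simp
      rw [e, abs_mul, abs_of_pos hd]
      have : (r.den : ℝ) ≤ Q := by exact_mod_cast hQ
      gcongr
    have h3 : |(r.num : ℝ)| ≤ (⌈(|α| + 1) * Q⌉ : ℤ) := h2.trans (Int.le_ceil _)
    rw [abs_le] at h3
    exact ⟨by exact_mod_cast h3.1, by exact_mod_cast h3.2⟩
  exact (((Set.finite_Icc _ _).prod (Set.finite_Iic Q)).image _).subset hsub

lemma IsApproxDen.le_distZ {α : ℝ} {q : ℕ} (hq : IsApproxDen α q) {m : ℤ} (hm : m ≠ 0)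
    (hmq : |m| < q) : 1 / (q : ℝ) ^ 2 ≤ distZ (m * α) := by
  obtain ⟨hq0, p, hp, hpα⟩ := hq
  have hq0' : (0 : ℝ) < q := by exact_mod_cast hq0
  set n := round ((m : ℝ) * α) with hn
  have hne : m * p - n * q ≠ 0 := by
    intro h
    have hdvd : (q : ℤ) ∣ m * p := ⟨n, by linarith⟩
    have h2 := hp.symm.dvd_of_dvd_mul_right hdvd
    have := Int.eq_zero_of_abs_lt_dvd h2 hmq
    exact hm this
  have h1 : (1 : ℝ) ≤ |(m * p - n * q : ℝ)| := by
    have : (1 : ℤ) ≤ |m * p - n * q| := Int.one_le_abs hne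
    exact_mod_cast this
  have hm' : |(m : ℝ)| ≤ q - 1 := by
    have : |m| ≤ (q : ℤ) - 1 := by omega
    exact_mod_cast this
  have e : q * ((m : ℝ) * α - n) = m * (α * q - p) + (m * p - n * q) := by ring
  have h2 : |(m * p - n * q : ℝ)| ≤ |q * ((m : ℝ) * α - n)| + |(m : ℝ) * (α * q - p)| := by
    have := abs_sub (q * ((m : ℝ) * α - n)) (m * (α * q - p))
    rw [e] at this ⊢
    simpa using this
  rw [abs_mul, abs_mul, abs_of_pos hq0'] at h2
  have h3 : |α * q - p| ≤ 1 / q := by rwa [le_div_iff₀ hq0']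
  have h4 : |(m : ℝ)| * |α * q - p| ≤ (q - 1) * (1 / q) := by
    apply mul_le_mul hm' h3 (abs_nonneg _)
    exact (abs_nonneg _).trans hm'
  have h5 : ((q : ℝ) - 1) * (1 / q) = 1 - 1 / q := by field_simp
  have h6 : 1 / (q : ℝ) ≤ q * |(m : ℝ) * α - n| := by linarith
  unfold distZ
  rw [← hn, div_le_iff₀ (by positivity)]
  rw [div_le_iff₀ hq0'] at h6
  nlinarith

lemma IsApproxDen.card_le {α : ℝ} {q : ℕ} (hq : IsApproxDen α q) {z w : ℝ} (hw : 0 ≤ w)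
    (T : Finset ℤ) (hT : ∀ k ∈ T, 2 * |k| < q ∧ distZ (k * α - z) ≤ w) :
    (T.card : ℝ) ≤ 2 * q * w + 4 := by
  obtain ⟨hq0, p, hp, hpα⟩ := hq
  have hq0' : (0 : ℝ) < q := by exact_mod_cast hq0
  set g : ℤ → ℤ := fun k => k * p - round ((k : ℝ) * α - z) * q with hg
  set I : Finset ℤ := Finset.Icc ⌈q * z - q * w - 1⌉ ⌊q * z + q * w + 1⌋ with hI
  have hmaps : ∀ k ∈ T, g k ∈ I := by
    intro k hk
    obtain ⟨hk1, hk2⟩ := hT k hk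
    unfold distZ at hk2
    set n := round ((k : ℝ) * α - z) with hn
    have hk1' : 2 * |(k : ℝ)| < q := by exact_mod_cast hk1
    have h1 : |(k : ℝ) * (α * q - p)| ≤ 1 := by
      rw [abs_mul]
      have : |(k : ℝ)| * |α * q - p| ≤ q * |α * q - p| := by
        gcongr
        linarith [abs_nonneg (k : ℝ)]
      linarith
    have h2 : |(q : ℝ) * ((k : ℝ) * α - z - n)| ≤ q * w := by
      rw [abs_mul, abs_of_pos hq0']; gcongr
    rw [abs_le] at h1 h2
    rw [hI, Finset.mem_Icc]
    constructor
    · rw [Int.ceil_le]; simp only [hg]; push_cast; nlinarith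
    · rw [Int.le_floor]; simp only [hg]; push_cast; nlinarith
  have hinj : Set.InjOn g T := by
    intro k hk k' hk' h
    simp only [hg] at h
    have hdvd : (q : ℤ) ∣ (k - k') * p :=
      ⟨round ((k : ℝ) * α - z) - round ((k' : ℝ) * α - z), by linarith⟩
    have h2 := hp.symm.dvd_of_dvd_mul_right hdvd
    have hlt : |k - k'| < q := by
      have h3 := (hT k hk).1
      have h4 := (hT k' hk').1
      have := abs_sub k k'
      omega
    have := Int.eq_zero_of_abs_lt_dvd h2 hlt
    omega
  have hcard := Finset.card_le_card_of_injOn g hmaps hinj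
  rw [hI, Int.card_Icc] at hcard
  have hcard' : (T.card : ℤ) ≤ max (⌊q * z + q * w + 1⌋ + 1 - ⌈q * z - q * w - 1⌉) 0 := by
    rw [← Int.toNat_eq_max]; exact_mod_cast hcard
  have h3 : (T.card : ℝ) ≤
      max ((⌊q * z + q * w + 1⌋ : ℝ) + 1 - ⌈q * z - q * w - 1⌉) 0 := by exact_mod_cast hcard'
  refine h3.trans (max_le ?_ (by positivity))
  have h4 := Int.floor_le (q * z + q * w + 1)
  have h5 := Int.le_ceil (q * z - q * w - 1)
  linarith

/-- The integers `k` with `|k| < q / 2`. -/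
noncomputable def halfRange (q : ℕ) : Finset ℤ :=
  (Finset.Ioo (-(q : ℤ)) q).filter fun k => 2 * |k| < q

lemma mem_halfRange {q : ℕ} {k : ℤ} : k ∈ halfRange q ↔ 2 * |k| < q := by
  simp only [halfRange, Finset.mem_filter, Finset.mem_Ioo, and_iff_right_iff_imp]
  intro h
  have := abs_nonneg k
  exact abs_lt.mp (by omega)

lemma le_card_halfRange (q : ℕ) : (q : ℝ) - 1 ≤ (halfRange q).card := by
  have hsub : Finset.Icc (-(((q : ℤ) - 1) / 2)) (((q : ℤ) - 1) / 2) ⊆ halfRange q := by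
    intro k hk
    rw [Finset.mem_Icc] at hk
    rw [mem_halfRange]
    have := abs_le.mpr hk
    by_cases hq : q = 0
    · subst hq
      simp at hk
      omega
    omega
  have h := Finset.card_le_card hsub
  rw [Int.card_Icc] at h
  have h2 : (q : ℤ) - 1 ≤ (halfRange q).card := by omega
  exact_mod_cast h2

lemma IsApproxDen.le_card {α : ℝ} {q : ℕ} (hq : IsApproxDen α q) {z w : ℝ} (hw : w ≤ 1 / 2) :
    2 * q * w - 5 ≤ (((halfRange q).filter fun k : ℤ => distZ (k * α - z) ≤ w).card : ℝ) := by
  have hsplit := Finset.card_filter_add_card_filter_not (s := halfRange q)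
    (fun k : ℤ => distZ (k * α - z) ≤ w)
  have h1 := hq.card_le (z := z + 1 / 2) (w := 1 / 2 - w) (by linarith)
    ((halfRange q).filter fun k : ℤ => ¬ distZ (k * α - z) ≤ w) (by
      intro k hk
      rw [Finset.mem_filter, mem_halfRange, not_le] at hk
      refine ⟨hk.1, ?_⟩
      have := distZ_sub_half_le hk.2.le
      rwa [sub_sub] at this)
  have h2 := le_card_halfRange q
  rw [← hsplit] at h2
  push_cast at h2
  linarith

lemma IsApproxDen.card_blocked_le {α : ℝ} {q : ℕ} (hq : IsApproxDen α q) {ι : Type*}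
    {z w v : ι → ℝ} (hw : ∀ i, 0 ≤ w i) (hv : ∀ i, 0 ≤ v i) (hwv : ∀ i, w i ≤ v i ^ 4)
    (hws : Summable w) (hvs : Summable v) (T : Finset ℤ)
    (hT : ∀ k ∈ T, 2 * |k| < q ∧
      ∃ i, 1 / (16 * (q : ℝ) ^ 2) ≤ w i ∧ distZ (k * α - z i) ≤ w i + 1 / (8 * (q : ℝ) ^ 2)) :
    (T.card : ℝ) ≤ 2 * q * ∑' i, w i + 10 * √q * ∑' i, v i := by
  have hq1 : (1 : ℝ) ≤ q := by exact_mod_cast hq.1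
  have hq0 : (0 : ℝ) < q := by linarith
  have hfin : {i | 1 / (16 * (q : ℝ) ^ 2) ≤ w i}.Finite := by
    have h := hws.tendsto_cofinite_zero.eventually_lt_const
      (show (0 : ℝ) < 1 / (16 * (q : ℝ) ^ 2) by positivity)
    rw [Filter.eventually_cofinite] at h
    simpa using h
  set S := hfin.toFinset with hS
  have hsub : T ⊆ S.biUnion fun i =>
      T.filter fun k : ℤ => distZ (k * α - z i) ≤ w i + 1 / (8 * (q : ℝ) ^ 2) := by
    intro k hk
    obtain ⟨-, i, hi1, hi2⟩ := hT k hk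
    rw [Finset.mem_biUnion]
    exact ⟨i, by simpa [hS] using hi1, by simp only [Finset.mem_filter]; exact ⟨hk, hi2⟩⟩
  have h1 : T.card ≤ ∑ i ∈ S,
      (T.filter fun k : ℤ => distZ (k * α - z i) ≤ w i + 1 / (8 * (q : ℝ) ^ 2)).card :=
    (Finset.card_le_card hsub).trans Finset.card_biUnion_le
  have h2 : (T.card : ℝ) ≤ ∑ i ∈ S, (2 * q * w i + 10 * √q * v i) := by
    refine (Nat.cast_le.mpr h1).trans ?_
    push_cast
    refine Finset.sum_le_sum fun i hi => ?_
    have hi : 1 / (16 * (q : ℝ) ^ 2) ≤ w i := by simpa [hS] using hi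
    have hc := hq.card_le (z := z i) (w := w i + 1 / (8 * (q : ℝ) ^ 2))
      (add_nonneg (hw i) (by positivity))
      (T.filter fun k : ℤ => distZ (k * α - z i) ≤ w i + 1 / (8 * (q : ℝ) ^ 2)) (by
        intro k hk
        rw [Finset.mem_filter] at hk
        exact ⟨(hT k hk.1).1, hk.2⟩)
    have h3 : 2 * (q : ℝ) * (1 / (8 * (q : ℝ) ^ 2)) ≤ 1 := by
      rw [mul_one_div, div_le_one (by positivity)]
      nlinarith
    have h4 : 1 ≤ 2 * √q * v i := by
      by_contra! hlt
      have h5 : (2 * √q * v i) ^ 4 < 1 :=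
        pow_lt_one₀ (by have := hv i; positivity) hlt (by norm_num)
      have h6 : (2 * √(q : ℝ) * v i) ^ 4 = 16 * (q : ℝ) ^ 2 * v i ^ 4 := by
        have : √(q : ℝ) ^ 4 = (q : ℝ) ^ 2 := by
          rw [show 4 = 2 * 2 by rfl, pow_mul, Real.sq_sqrt hq0.le]
        rw [mul_pow, mul_pow, this]; norm_num
      have h7 := hi.trans (hwv i)
      rw [div_le_iff₀ (by positivity)] at h7
      linarith
    linarith
  refine h2.trans ?_
  have hs : Summable fun i => 2 * (q : ℝ) * w i + 10 * √q * v i :=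
    (hws.mul_left _).add (hvs.mul_left _)
  refine (hs.sum_le_tsum S fun i _ => ?_).trans_eq ?_
  · have := hw i; have := hv i; positivity
  · rw [(hws.mul_left _).tsum_add (hvs.mul_left _), tsum_mul_left, tsum_mul_left]

lemma eventually_level_bounds {ρ δ : ℝ} (hρ : 0 < ρ) (hδ : 0 < δ) (C : ℝ) (N : ℕ) :
    ∀ᶠ q : ℕ in atTop, (N : ℝ) ≤ √q ∧ Real.exp (-δ * √q) ≤ 1 / (8 * (q : ℝ) ^ 2) ∧
      C * √q + 6 ≤ q * ρ / 2 := by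
  have hsq : Tendsto (fun q : ℕ => √(q : ℝ)) atTop atTop :=
    Real.tendsto_sqrt_atTop.comp tendsto_natCast_atTop_atTop
  have h1 : ∀ᶠ y : ℝ in atTop, (N : ℝ) ≤ y ∧ y ^ 4 * Real.exp (-δ * y) ≤ 1 / 8 ∧
      C * y + 6 ≤ y ^ 2 * ρ / 2 := by
    have ha := (Real.tendsto_pow_mul_exp_neg_atTop_nhds_zero 4).comp
      (tendsto_id.const_mul_atTop hδ)
    filter_upwards [eventually_ge_atTop (N : ℝ), eventually_ge_atTop 1,
      ha.eventually_lt_const (show (0 : ℝ) < δ ^ 4 / 8 by positivity),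
      eventually_ge_atTop ((|C| + 6) * 2 / ρ)] with y h1 h2 h3 h4
    refine ⟨h1, ?_, ?_⟩
    · simp only [Function.comp_apply, id_eq] at h3
      rw [mul_pow, ← neg_mul] at h3
      have h5 : δ ^ 4 * (y ^ 4 * Real.exp (-δ * y)) ≤ δ ^ 4 * (1 / 8) := by linarith
      exact le_of_mul_le_mul_left h5 (by positivity)
    · rw [div_le_iff₀ hρ] at h4
      have h5 : C * y ≤ |C| * y := by gcongr; exact le_abs_self C
      nlinarith
  filter_upwards [hsq.eventually h1, eventually_ge_atTop 1] with q hq hq1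
  have hq0 : (0 : ℝ) < q := by exact_mod_cast hq1
  have e : √(q : ℝ) ^ 4 = (q : ℝ) ^ 2 := by
    rw [show 4 = 2 * 2 by rfl, pow_mul, Real.sq_sqrt hq0.le]
  obtain ⟨h1, h2, h3⟩ := hq
  rw [e] at h2
  rw [Real.sq_sqrt hq0.le] at h3
  refine ⟨h1, ?_, h3⟩
  rw [le_div_iff₀ (by positivity)]
  linarith

lemma exists_level {α : ℝ} (hα : Irrational α) {c ρ δ : ℝ} (hρ : 0 < ρ) (hρ1 : ρ ≤ 1 / 2)
    (hδ : 0 < δ) {ι : Type*} {z w v : ι → ℝ} (hw : ∀ i, 0 ≤ w i) (hv : ∀ i, 0 ≤ v i)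
    (hwv : ∀ i, w i ≤ v i ^ 4) (hws : Summable w) (hvs : Summable v)
    (hwρ : ∑' i, w i ≤ ρ / 16) {R u : ℤ → ℝ} (hR : ∀ i, 0 ≤ R i) (hu : ∀ i, 0 ≤ u i)
    (hRu : ∀ i, R i ≤ u i ^ 4) (hRs : Summable R) (hus : Summable u)
    (hRρ : ∑' i, R i ≤ ρ / 8) (N : ℕ) :
    ∃ q : ℕ, IsApproxDen α q ∧ ∃ G : Finset ℤ, q * ρ / 8 ≤ (G.card : ℝ) ∧ ∀ k ∈ G,
      (N : ℤ) ≤ |k| ∧ 2 * |k| < q ∧ Real.exp (-δ * |(k : ℝ)|) ≤ 1 / (8 * (q : ℝ) ^ 2) ∧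
      distZ (k * α - c) ≤ ρ / 2 ∧
      (∀ i, 1 / (16 * (q : ℝ) ^ 2) ≤ w i →
        w i + Real.exp (-δ * |(k : ℝ)|) < distZ (k * α - z i)) ∧
      ∀ k' : ℤ, |k'| < |k| → R k' + Real.exp (-δ * |(k : ℝ)|) < distZ (k * α - k' * α) := by
  obtain ⟨Q, hQ⟩ := eventually_atTop.mp (eventually_level_bounds hρ hδ
    (10 * ∑' i, v i + 10 * ∑' i, u i + 2) N)
  obtain ⟨q, hQq, hq⟩ := exists_isApproxDen_ge hα Q
  obtain ⟨hN, hexp, hC⟩ := hQ q hQq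
  refine ⟨q, hq, ?_⟩
  have hq1 : (1 : ℝ) ≤ q := by exact_mod_cast hq.1
  have hq0 : (0 : ℝ) < q := by linarith
  set K := (halfRange q).filter fun k : ℤ => distZ (k * α - c) ≤ ρ / 2 with hK
  set B₀ := Finset.Ioo (-(⌈√(q : ℝ)⌉)) ⌈√(q : ℝ)⌉ with hB₀
  set B₁ := (halfRange q).filter fun k : ℤ =>
    ∃ i, 1 / (16 * (q : ℝ) ^ 2) ≤ w i ∧ distZ (k * α - z i) ≤ w i + 1 / (8 * (q : ℝ) ^ 2) with hB₁
  set B₂ := (halfRange q).filter fun k : ℤ =>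
    ∃ k' : ℤ, 1 / (16 * (q : ℝ) ^ 2) ≤ R k' ∧
      distZ (k * α - k' * α) ≤ R k' + 1 / (8 * (q : ℝ) ^ 2) with hB₂
  have hKc : q * ρ - 5 ≤ (K.card : ℝ) := by
    have := hq.le_card (z := c) (w := ρ / 2) (by linarith)
    rw [← hK] at this
    linarith
  have hB₀c : (B₀.card : ℝ) ≤ 2 * √q + 1 := by
    have h1 : (B₀.card : ℤ) = 2 * ⌈√(q : ℝ)⌉ - 1 := by
      have : 0 < ⌈√(q : ℝ)⌉ := Int.ceil_pos.mpr (Real.sqrt_pos.mpr hq0)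
      rw [hB₀, Int.card_Ioo]; omega
    have h2 : (B₀.card : ℝ) = 2 * ⌈√(q : ℝ)⌉ - 1 := by exact_mod_cast h1
    have := Int.ceil_lt_add_one √(q : ℝ)
    linarith
  have hB₁c : (B₁.card : ℝ) ≤ 2 * q * ∑' i, w i + 10 * √q * ∑' i, v i :=
    hq.card_blocked_le hw hv hwv hws hvs B₁ fun k hk => by
      rw [hB₁, Finset.mem_filter, mem_halfRange] at hk; exact hk
  have hB₂c : (B₂.card : ℝ) ≤ 2 * q * ∑' i, R i + 10 * √q * ∑' i, u i :=
    hq.card_blocked_le (z := fun k' : ℤ => k' * α) hR hu hRu hRs hus B₂ fun k hk => by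
      rw [hB₂, Finset.mem_filter, mem_halfRange] at hk; exact hk
  refine ⟨K \ (B₀ ∪ (B₁ ∪ B₂)), ?_, ?_⟩
  · have h1 : K.card ≤ (K \ (B₀ ∪ (B₁ ∪ B₂))).card + (B₀.card + (B₁.card + B₂.card)) := by
      have h2 := Finset.card_le_card_sdiff_add_card (s := K) (t := B₀ ∪ (B₁ ∪ B₂))
      have h3 := Finset.card_union_le B₀ (B₁ ∪ B₂)
      have h4 := Finset.card_union_le B₁ B₂
      omega
    have h1' : (K.card : ℝ) ≤ (K \ (B₀ ∪ (B₁ ∪ B₂))).card +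
        (B₀.card + (B₁.card + B₂.card)) := by exact_mod_cast h1
    nlinarith
  · intro k hk
    rw [Finset.mem_sdiff, Finset.mem_union, Finset.mem_union, not_or, not_or] at hk
    obtain ⟨hkK, hk0, hk1, hk2⟩ := hk
    rw [hK, Finset.mem_filter] at hkK
    have hkq := mem_halfRange.mp hkK.1
    have hsqk : √(q : ℝ) ≤ |(k : ℝ)| := by
      have : ⌈√(q : ℝ)⌉ ≤ |k| := by
        by_contra! hlt
        exact hk0 (by rw [hB₀, Finset.mem_Ioo]; exact abs_lt.mp hlt)
      have h2 := Int.ceil_le.mp this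
      exact_mod_cast h2
    have hr : Real.exp (-δ * |(k : ℝ)|) ≤ 1 / (8 * (q : ℝ) ^ 2) :=
      (Real.exp_le_exp.mpr (by nlinarith)).trans hexp
    refine ⟨?_, hkq, hr, hkK.2, ?_, ?_⟩
    · have := hN.trans hsqk
      exact_mod_cast this
    · intro i hi
      by_contra! hle
      exact hk1 (by rw [hB₁, Finset.mem_filter]; exact ⟨hkK.1, i, hi, by linarith⟩)
    · intro k' hk'
      by_contra! hle
      rcases le_or_gt (1 / (16 * (q : ℝ) ^ 2)) (R k') with h | h
      · exact hk2 (by rw [hB₂, Finset.mem_filter]; exact ⟨hkK.1, k', h, by linarith⟩)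
      · have hne : k - k' ≠ 0 := by
          intro h0
          rw [sub_eq_zero.mp h0] at hk'
          exact lt_irrefl _ hk'
        have hsep := hq.le_distZ hne (by have := abs_sub k k'; omega)
        push_cast at hsep
        rw [sub_mul] at hsep
        have e1 : 1 / (16 * (q : ℝ) ^ 2) = (1 / (q : ℝ) ^ 2) / 16 := by field_simp
        have e2 : 1 / (8 * (q : ℝ) ^ 2) = (1 / (q : ℝ) ^ 2) / 8 := by field_simp
        have : 0 < 1 / (q : ℝ) ^ 2 := by positivity
        linarith

lemma summable_exp_neg_mul_abs {η : ℝ} (hη : 0 < η) :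
    Summable fun k : ℤ => Real.exp (-η * |(k : ℝ)|) := by
  have h : Summable fun n : ℕ => Real.exp (-η * (n : ℝ)) := by
    have := Real.summable_exp_nat_mul_iff.mpr (neg_neg_of_pos hη)
    simpa [mul_comm] using this
  refine Summable.of_nat_of_neg ?_ ?_
  · simpa using h
  · simpa using h

lemma exists_stage {α : ℝ} (hα : Irrational α) {c ρ δ η κ : ℝ} (hρ : 0 < ρ) (hρ1 : ρ ≤ 1 / 2)
    (hδ : 0 < δ) (hη : 0 < η) (hκ0 : 0 ≤ κ) (hκ1 : κ ≤ 1)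
    (hκ : κ * ∑' k : ℤ, Real.exp (-η * |(k : ℝ)|) ≤ ρ / 16)
    {ι : Type*} {A : Set ι} {z w f : ι → ℝ} (hw : ∀ i, 0 ≤ w i) (hf : ∀ i, 0 ≤ f i)
    (hwf : ∀ i, w i ≤ f i) (hwf4 : ∀ i, w i ≤ (4 * f i) ^ 4) (hfs : Summable f)
    (hwρ : ∑' i, A.indicator w i ≤ ρ / 16) (M : ℕ) :
    ∃ k : ℤ, (M : ℤ) ≤ |k| ∧ distZ (k * α - c) ≤ ρ / 2 ∧ Real.exp (-δ * |(k : ℝ)|) ≤ ρ / 2 ∧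
      (∀ k' : ℤ, |k'| < |k| →
        κ * Real.exp (-η * |(k' : ℝ)|) + Real.exp (-δ * |(k : ℝ)|) < distZ (k * α - k' * α)) ∧
      ∑' i, (A ∩ {i | distZ (k * α - z i) ≤ w i + Real.exp (-δ * |(k : ℝ)|)}).indicator f i ≤
        1 / (2 * δ * |(k : ℝ)|) := by
  set S₁ := ∑' k : ℤ, Real.exp (-(δ / 2) * |(k : ℝ)|) with hS₁
  have hs₁ := summable_exp_neg_mul_abs (half_pos hδ)
  obtain ⟨L, hLM, hL1, hL2⟩ : ∃ L : ℕ, M + 1 ≤ L ∧ 2 * Real.exp (-(δ / 2) * L) * S₁ ≤ ρ / 16 ∧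
      Real.exp (-δ * L) ≤ ρ / 2 := by
    have h (a : ℝ) (ha : 0 < a) : Tendsto (fun n : ℕ => Real.exp (-a * n)) atTop (nhds 0) := by
      have h1 : Tendsto (fun n : ℕ => a * (n : ℝ)) atTop atTop :=
        tendsto_natCast_atTop_atTop.const_mul_atTop ha
      simpa [Function.comp_def] using Real.tendsto_exp_neg_atTop_nhds_zero.comp h1
    have h1 : Tendsto (fun n : ℕ => 2 * Real.exp (-(δ / 2) * n) * S₁) atTop (nhds 0) := by
      simpa using ((h _ (half_pos hδ)).const_mul 2).mul_const S₁
    obtain ⟨L, hL⟩ := (((h1.eventually_lt_const (show 0 < ρ / 16 by linarith)).and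
      ((h δ hδ).eventually_lt_const (half_pos hρ))).and (eventually_ge_atTop (M + 1))).exists
    exact ⟨L, hL.2, hL.1.1.le, hL.1.2.le⟩
  set lam := 2 * Real.exp (-(δ / 2) * L) with hlam
  have hlam0 : 0 < lam := by positivity
  have hlam2 : lam ≤ 2 := by
    have : Real.exp (-(δ / 2) * L) ≤ 1 := Real.exp_le_one_iff.mpr (by
      have : (0 : ℝ) ≤ L := by positivity
      nlinarith)
    linarith
  set R : ℤ → ℝ := fun k =>
    κ * Real.exp (-η * |(k : ℝ)|) + lam * Real.exp (-(δ / 2) * |(k : ℝ)|) with hR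
  set u : ℤ → ℝ := fun k =>
    Real.exp (-(η / 4) * |(k : ℝ)|) + 2 * Real.exp (-(δ / 8) * |(k : ℝ)|) with hu
  have hRL (k : ℤ) (hk : (L : ℤ) ≤ |k|) : 2 * Real.exp (-δ * |(k : ℝ)|) ≤ R k := by
    have hk' : (L : ℝ) ≤ |(k : ℝ)| := by exact_mod_cast hk
    have h1 : Real.exp (-δ * |(k : ℝ)|) ≤
        Real.exp (-(δ / 2) * L) * Real.exp (-(δ / 2) * |(k : ℝ)|) := by
      rw [← Real.exp_add]
      apply Real.exp_le_exp.mpr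
      nlinarith
    have h2 : 0 ≤ κ * Real.exp (-η * |(k : ℝ)|) := by positivity
    simp only [hR, hlam]
    linarith
  have hR0 (k : ℤ) : 0 ≤ R k := by simp only [hR]; positivity
  have hu0 (k : ℤ) : 0 ≤ u k := by simp only [hu]; positivity
  have hRu (k : ℤ) : R k ≤ u k ^ 4 := by
    have e1 : Real.exp (-(η / 4) * |(k : ℝ)|) ^ 4 = Real.exp (-η * |(k : ℝ)|) := by
      rw [← Real.exp_nat_mul]; congr 1; push_cast; ring
    have e2 : Real.exp (-(δ / 8) * |(k : ℝ)|) ^ 4 = Real.exp (-(δ / 2) * |(k : ℝ)|) := by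
      rw [← Real.exp_nat_mul]; congr 1; push_cast; ring
    have hxy (x y : ℝ) (hx : 0 ≤ x) (hy : 0 ≤ y) : x ^ 4 + y ^ 4 ≤ (x + y) ^ 4 := by
      have : 0 ≤ 4 * x ^ 3 * y + 6 * x ^ 2 * y ^ 2 + 4 * x * y ^ 3 := by positivity
      nlinarith
    refine le_trans ?_ (hxy _ _ (Real.exp_pos _).le (by positivity))
    rw [mul_pow, e1, e2]
    simp only [hR]
    have h1 : κ * Real.exp (-η * |(k : ℝ)|) ≤ 1 * Real.exp (-η * |(k : ℝ)|) := by gcongr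
    have h2 : lam * Real.exp (-(δ / 2) * |(k : ℝ)|) ≤ 2 ^ 4 * Real.exp (-(δ / 2) * |(k : ℝ)|) := by
      gcongr; linarith
    linarith
  have hRs : Summable R :=
    ((summable_exp_neg_mul_abs hη).mul_left κ).add (hs₁.mul_left lam)
  have hus : Summable u := (summable_exp_neg_mul_abs (by positivity)).add
    ((summable_exp_neg_mul_abs (by positivity)).mul_left 2)
  have hRρ : ∑' k, R k ≤ ρ / 8 := by
    simp only [hR]
    rw [((summable_exp_neg_mul_abs hη).mul_left κ).tsum_add (hs₁.mul_left lam), tsum_mul_left,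
      tsum_mul_left]
    linarith
  set r : ℤ → ℝ := fun k => Real.exp (-δ * |(k : ℝ)|) with hr
  set W : ι → ℝ := A.indicator w with hW
  have hW0 (i : ι) : 0 ≤ W i := Set.indicator_nonneg (fun i _ => hw i) i
  have hWw (i : ι) : W i ≤ w i := Set.indicator_le_self' (fun i _ => hw i) i
  have hWs : Summable W := Summable.of_nonneg_of_le hW0 (fun i => (hWw i).trans (hwf i)) hfs
  set P : ℤ → Prop := fun k => (L : ℤ) ≤ |k| ∧ distZ (k * α - c) ≤ ρ / 2 ∧
    (∀ k' : ℤ, |k'| < |k| → R k' + r k < distZ (k * α - k' * α)) ∧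
    ∃ q : ℕ, IsApproxDen α q ∧ 2 * |k| < q ∧ r k ≤ 1 / (8 * (q : ℝ) ^ 2) ∧
      ∀ i, 1 / (16 * (q : ℝ) ^ 2) ≤ W i → W i + r k < distZ (k * α - z i) with hP
  set B : ℤ → Set ι := fun k => A ∩ {i | distZ (k * α - z i) ≤ w i + r k} with hB
  have hdisj (k₁ k₂ : ℤ) (hne : k₁ ≠ k₂) (h1 : (L : ℤ) ≤ |k₁|) (h12 : |k₁| ≤ |k₂|) (h2 : P k₂)
      (i : ι) (hi1 : i ∈ B k₁) (hi2 : i ∈ B k₂) : False := by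
    obtain ⟨-, -, hsep, q, hq, hkq, hrq, hbl⟩ := h2
    have hWi : W i = w i := Set.indicator_of_mem hi1.1 w
    have hsmall : w i < 1 / (16 * (q : ℝ) ^ 2) := by
      by_contra! hle
      have := hbl i (hWi ▸ hle)
      rw [hWi] at this
      exact absurd hi2.2 (not_le.mpr this)
    have htri : distZ (k₂ * α - k₁ * α) ≤ 2 * w i + r k₁ + r k₂ := by
      have h3 := distZ_sub_le (k₂ * α) (z i) (k₁ * α)
      have h4 : distZ (k₂ * α - z i) ≤ w i + r k₂ := hi2.2
      have h5 : distZ (k₁ * α - z i) ≤ w i + r k₁ := hi1.2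
      rw [distZ_sub_comm] at h5
      linarith
    have hq0 : (0 : ℝ) < q := by exact_mod_cast hq.1
    have e1 : 1 / (16 * (q : ℝ) ^ 2) = (1 / (q : ℝ) ^ 2) / 16 := by field_simp
    have e2 : 1 / (8 * (q : ℝ) ^ 2) = (1 / (q : ℝ) ^ 2) / 8 := by field_simp
    have hqp : 0 < 1 / (q : ℝ) ^ 2 := by positivity
    have hsq := hq.le_distZ (m := k₂ - k₁) (sub_ne_zero.mpr hne.symm)
      (by have := abs_sub k₂ k₁; omega)
    push_cast at hsq
    rw [sub_mul] at hsq
    rcases le_or_gt (r k₁) (1 / (8 * (q : ℝ) ^ 2)) with hr1 | hr1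
    · linarith
    · have hlt : |k₁| < |k₂| := by
        refine lt_of_le_of_ne h12 fun heq => ?_
        have : r k₁ = r k₂ := by
          simp only [hr]
          have : |(k₁ : ℝ)| = |(k₂ : ℝ)| := by exact_mod_cast heq
          rw [this]
        linarith
      have h3 := hsep k₁ hlt
      have h4 := hRL k₁ h1
      have h5 : 2 * r k₁ ≤ R k₁ := h4
      linarith
  have hBs (k : ℤ) : Summable ((B k).indicator f) := hfs.indicator _
  have hsum (G : Finset ℤ) (hG : ∀ k ∈ G, P k) :
      ∑ k ∈ G, ∑' i, (B k).indicator f i ≤ ∑' i, f i := by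
    rw [← Summable.tsum_finsetSum fun k _ => hBs k]
    refine Summable.tsum_le_tsum (fun i => ?_) (summable_sum fun k _ => hBs k) hfs
    by_cases hex : ∃ k ∈ G, i ∈ B k
    · obtain ⟨k, hk, hik⟩ := hex
      rw [Finset.sum_eq_single k, Set.indicator_of_mem hik]
      · intro k' hk' hne
        refine Set.indicator_of_notMem (fun hik' => ?_) _
        rcases le_total |k| |k'| with h | h
        · exact hdisj k k' hne.symm (hG k hk).1 h (hG k' hk') i hik hik'
        · exact hdisj k' k hne (hG k' hk').1 h (hG k hk) i hik' hik
      · exact fun h => absurd hk h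
    · push Not at hex
      rw [Finset.sum_eq_zero fun k hk => Set.indicator_of_notMem (hex k hk) _]
      exact hf i
  by_contra! hcon
  have hbig (k : ℤ) (hk : P k) : 1 / (2 * δ * |(k : ℝ)|) < ∑' i, (B k).indicator f i := by
    have hkL : (L : ℝ) ≤ |(k : ℝ)| := by exact_mod_cast hk.1
    refine hcon k ?_ hk.2.1 ?_ ?_
    · have := hk.1; omega
    · exact (Real.exp_le_exp.mpr (by nlinarith)).trans hL2
    · intro k' hk'
      refine lt_of_le_of_lt ?_ (hk.2.2.1 k' hk')
      simp only [hR, hr]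
      have : 0 ≤ lam * Real.exp (-(δ / 2) * |(k' : ℝ)|) := by positivity
      linarith
  set g : ℤ → ℝ := fun k => if P k then 1 / (2 * δ * |(k : ℝ)|) else 0 with hg
  have hg0 (k : ℤ) : 0 ≤ g k := by
    simp only [hg]; split_ifs
    · positivity
    · exact le_rfl
  have hgs : Summable g := by
    refine summable_of_sum_le (c := ∑' i, f i) hg0 fun G => ?_
    have : ∑ k ∈ G, g k = ∑ k ∈ G.filter P, 1 / (2 * δ * |(k : ℝ)|) := by
      rw [Finset.sum_filter]
    rw [this]
    refine le_trans (Finset.sum_le_sum fun k hk => ?_)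
      (hsum (G.filter P) fun k hk => (Finset.mem_filter.mp hk).2)
    exact (hbig k (Finset.mem_filter.mp hk).2).le
  obtain ⟨s, hs⟩ := summable_iff_vanishing_norm.mp hgs (ρ / (8 * δ)) (by positivity)
  obtain ⟨q, hq, G, hGc, hG⟩ := exists_level hα (c := c) (z := z) hρ hρ1 hδ hW0
    (v := fun i => 4 * f i) (fun i => by have := hf i; positivity)
    (fun i => (hWw i).trans (hwf4 i)) hWs (hfs.mul_left 4) hwρ hR0 hu0 hRu hRs hus hRρ
    (L + s.sup Int.natAbs + 1)
  have hGP : ∀ k ∈ G, P k := by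
    intro k hk
    obtain ⟨h1, h2, h3, h4, h5, h6⟩ := hG k hk
    exact ⟨by push_cast at h1; omega, h4, h6, q, hq, h2, h3, h5⟩
  have hdis : Disjoint G s := by
    rw [Finset.disjoint_left]
    intro k hk hks
    have h1 := (hG k hk).1
    have h2 : k.natAbs ≤ s.sup Int.natAbs := Finset.le_sup (f := Int.natAbs) hks
    rw [Int.abs_eq_natAbs] at h1
    omega
  have h1 := hs G hdis
  have hq0 : (0 : ℝ) < q := by exact_mod_cast hq.1
  have h2 : ρ / (8 * δ) ≤ ∑ k ∈ G, g k := by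
    have h3 : ∀ k ∈ G, 1 / (δ * q) ≤ g k := by
      intro k hk
      simp only [hg]
      rw [if_pos (hGP k hk)]
      have h4 : 2 * |(k : ℝ)| < q := by exact_mod_cast (hG k hk).2.1
      have h5 : (1 : ℝ) ≤ |(k : ℝ)| := by
        have := (hGP k hk).1
        have : (1 : ℤ) ≤ |k| := by omega
        exact_mod_cast this
      apply one_div_le_one_div_of_le (by positivity)
      nlinarith
    have h4 := Finset.card_nsmul_le_sum G g _ h3
    rw [nsmul_eq_mul] at h4
    refine le_trans ?_ h4
    have e : ρ / (8 * δ) = (q * ρ / 8) * (1 / (δ * q)) := by field_simp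
    rw [e]
    gcongr
  rw [Real.norm_of_nonneg (Finset.sum_nonneg fun k _ => hg0 k)] at h1
  linarith

lemma mul_exp_neg_inv_le {t : ℝ} (ht : 0 ≤ t) :
    t * Real.exp (-(1 / (2 * t))) ≤ t ∧ t * Real.exp (-(1 / (2 * t))) ≤ (4 * t) ^ 4 := by
  rcases ht.eq_or_lt with rfl | ht
  · simp
  · have h0 : 0 < 1 / (2 * t) := by positivity
    constructor
    · have : Real.exp (-(1 / (2 * t))) ≤ 1 := Real.exp_le_one_iff.mpr (by linarith)
      nlinarith
    · have h1 := Real.pow_div_factorial_le_exp (1 / (2 * t)) h0.le 3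
      have h2 : (0 : ℝ) < (1 / (2 * t)) ^ 3 / (Nat.factorial 3 : ℝ) := by positivity
      have h3 : Real.exp (-(1 / (2 * t))) ≤ 48 * t ^ 3 := by
        rw [Real.exp_neg]
        refine (inv_anti₀ h2 h1).trans_eq ?_
        norm_num [Nat.factorial]
        field_simp
        norm_num
      have h4 : t * Real.exp (-(1 / (2 * t))) ≤ t * (48 * t ^ 3) := by gcongr
      have : 0 < t ^ 4 := by positivity
      nlinarith

/-- A closed interval `[c - ρ, c + ρ]`, the absolute value `K` of the index of its centre, and the
set `A` of those members of a cover that may still meet it. -/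
structure CantorStage (ι : Type*) where
  c : ℝ
  ρ : ℝ
  K : ℕ
  A : Set ι

/-- The smallness conditions under which a stage of the construction can be refined. -/
def CantorStage.Good {ι : Type*} (w : ι → ℝ) (η : ℝ) (S : CantorStage ι) : Prop :=
  0 < S.ρ ∧ S.ρ ≤ 1 / 2 ∧ ∑' i, S.A.indicator w i ≤ S.ρ / 16 ∧
    Real.exp (-η * S.K) * ∑' k : ℤ, Real.exp (-η * |(k : ℝ)|) ≤ 1 / 16

/-- The second stage is an interval inside the first one, centred (mod `ℤ`) at a multiple `k * α`
where `|k|` is its `K`. -/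
def CantorStage.Refines {ι : Type*} (α : ℝ) (z w f : ι → ℝ) (δ η : ℝ)
    (S S' : CantorStage ι) : Prop :=
  S.K < S'.K ∧ S'.ρ = Real.exp (-δ * S'.K) ∧ |S'.c - S.c| + S'.ρ ≤ S.ρ ∧
    S'.A = S.A ∩ {i | distZ (S'.c - z i) ≤ w i + S'.ρ} ∧
    (∀ i ∈ S'.A, f i ≤ 1 / (2 * δ * S'.K)) ∧
    (∃ k m : ℤ, |k| = S'.K ∧ S'.c = k * α + m) ∧
    ∀ k : ℤ, |k| < S'.K → S.ρ * Real.exp (-η * S.K) * Real.exp (-η * |(k : ℝ)|) + S'.ρ <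
      distZ (S'.c - k * α)

lemma eventually_exp_mul_tsum_le {η : ℝ} (hη : 0 < η) : ∀ᶠ n : ℕ in atTop,
    Real.exp (-η * n) * ∑' k : ℤ, Real.exp (-η * |(k : ℝ)|) ≤ 1 / 16 := by
  have h1 : Tendsto (fun n : ℕ => η * (n : ℝ)) atTop atTop :=
    tendsto_natCast_atTop_atTop.const_mul_atTop hη
  have h2 : Tendsto (fun n : ℕ => Real.exp (-η * n) * ∑' k : ℤ, Real.exp (-η * |(k : ℝ)|))
      atTop (nhds 0) := by
    simpa [Function.comp_def] using (Real.tendsto_exp_neg_atTop_nhds_zero.comp h1).mul_const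
      (∑' k : ℤ, Real.exp (-η * |(k : ℝ)|))
  filter_upwards [h2.eventually_lt_const (show (0 : ℝ) < 1 / 16 by norm_num)] with n hn
  exact hn.le

lemma CantorStage.exists_refines {α : ℝ} (hα : Irrational α) {δ η η' : ℝ} (hδ : 0 < δ)
    (hη : 0 < η) (hη' : 0 < η') {ι : Type*} {z w f : ι → ℝ} (hw : ∀ i, 0 ≤ w i)
    (hf : ∀ i, 0 ≤ f i) (hwf : ∀ i, w i ≤ f i * Real.exp (-(1 / (2 * f i)))) (hfs : Summable f)
    {S : CantorStage ι} (hS : S.Good w η) :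
    ∃ S' : CantorStage ι, S'.Good w η' ∧ S.Refines α z w f δ η S' := by
  obtain ⟨hρ, hρ1, hwρ, hηS⟩ := hS
  obtain ⟨M, ⟨hM1, hM2⟩, hM3⟩ := ((eventually_exp_mul_tsum_le hη').and
    (tendsto_natCast_atTop_atTop.eventually_ge_atTop (8 / δ))).and
      (eventually_ge_atTop (S.K + 1)) |>.exists
  have hκ1 : S.ρ * Real.exp (-η * S.K) ≤ 1 := by
    have h1 : Real.exp (-η * S.K) ≤ 1 := Real.exp_le_one_iff.mpr (by
      have : (0 : ℝ) ≤ S.K := by positivity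
      nlinarith)
    have := Real.exp_pos (-η * S.K)
    nlinarith
  obtain ⟨k, hk1, hk2, hk3, hk4, hk5⟩ := exists_stage hα (c := S.c) (z := z) hρ hρ1 hδ hη
    (κ := S.ρ * Real.exp (-η * S.K)) (by positivity) hκ1 (by nlinarith) hw hf
    (fun i => (hwf i).trans (mul_exp_neg_inv_le (hf i)).1)
    (fun i => (hwf i).trans (mul_exp_neg_inv_le (hf i)).2) hfs hwρ M
  set m := -round ((k : ℝ) * α - S.c) with hm
  have habs : |(k : ℝ)| = (k.natAbs : ℝ) := by
    rw [Nat.cast_natAbs, Int.cast_abs]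
  have hMk : M ≤ k.natAbs := by rw [Int.abs_eq_natAbs] at hk1; exact_mod_cast hk1
  have hMk' : (M : ℝ) ≤ k.natAbs := by exact_mod_cast hMk
  have hshift (y : ℝ) : distZ (k * α + m - y) = distZ (k * α - y) := by
    rw [← distZ_add_int (k * α - y) m]; congr 1; ring
  rw [habs] at hk3 hk4 hk5
  set A' := S.A ∩ {i | distZ (k * α - z i) ≤ w i + Real.exp (-δ * k.natAbs)} with hA'
  have hδk : 8 ≤ δ * k.natAbs := by
    rw [div_le_iff₀ hδ] at hM2
    nlinarith
  have hfA (i : ι) (hi : i ∈ A') : f i ≤ 1 / (2 * δ * k.natAbs) := by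
    refine le_trans ?_ hk5
    have := (hfs.indicator A').le_tsum i fun j _ => Set.indicator_nonneg (fun a _ => hf a) j
    rwa [Set.indicator_of_mem hi] at this
  have hwA (i : ι) : A'.indicator w i ≤ A'.indicator f i * Real.exp (-δ * k.natAbs) := by
    by_cases hi : i ∈ A'
    · rw [Set.indicator_of_mem hi, Set.indicator_of_mem hi]
      refine (hwf i).trans ?_
      rcases (hf i).eq_or_lt with h0 | h0
      · simp [← h0]
      · have h1 := hfA i hi
        rw [le_div_iff₀ (by nlinarith)] at h1
        have h2 : δ * k.natAbs ≤ 1 / (2 * f i) := by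
          rw [le_div_iff₀ (by positivity)]; linarith
        have h3 : Real.exp (-(1 / (2 * f i))) ≤ Real.exp (-δ * k.natAbs) :=
          Real.exp_le_exp.mpr (by linarith)
        gcongr
    · rw [Set.indicator_of_notMem hi, Set.indicator_of_notMem hi]; simp
  refine ⟨⟨k * α + m, Real.exp (-δ * k.natAbs), k.natAbs, A'⟩, ⟨Real.exp_pos _, ?_, ?_, ?_⟩,
    ?_, rfl, ?_, ?_, hfA, ⟨k, m, Int.abs_eq_natAbs k, rfl⟩, ?_⟩
  · simp only; linarith
  · simp only
    have hws : Summable (A'.indicator w) :=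
      (Summable.of_nonneg_of_le hw (fun i => (hwf i).trans (mul_exp_neg_inv_le (hf i)).1)
        hfs).indicator _
    refine (hws.tsum_le_tsum hwA ((hfs.indicator A').mul_right _)).trans ?_
    rw [tsum_mul_right]
    have h1 : 1 / (2 * δ * k.natAbs) ≤ 1 / 16 :=
      one_div_le_one_div_of_le (by norm_num) (by linarith)
    have := Real.exp_pos (-δ * k.natAbs)
    nlinarith
  · simp only
    refine le_trans ?_ hM1
    have : 0 ≤ ∑' k : ℤ, Real.exp (-η' * |(k : ℝ)|) := tsum_nonneg fun _ => (Real.exp_pos _).le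
    refine mul_le_mul_of_nonneg_right (Real.exp_le_exp.mpr ?_) this
    nlinarith
  · simp only; omega
  · simp only
    have : |k * α + m - S.c| = distZ (k * α - S.c) := by
      rw [distZ, hm]; congr 1; push_cast; ring
    rw [this]; linarith
  · simp only [hshift]; rfl
  · intro k' hk'
    simp only [hshift]
    exact hk4 k' (by rw [Int.abs_eq_natAbs k]; exact hk')

/-- The main construction: a point of `[0, 1]` which avoids a prescribed cover and which is
approximated by multiples of `α` at a prescribed exponential rate, but not much better. -/
lemma exists_resonant_point {α : ℝ} (hα : Irrational α) {d : ℝ} (hd : 0 < d) {δ η : ℕ → ℝ}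
    (hδ : ∀ n, d ≤ δ n) (hη : ∀ n, 0 < η n) {ι : Type*} {z w f : ι → ℝ} (hw : ∀ i, 0 ≤ w i)
    (hf : ∀ i, 0 ≤ f i) (hwf : ∀ i, w i ≤ f i * Real.exp (-(1 / (2 * f i)))) (hfs : Summable f)
    (hws : ∑' i, w i ≤ 1 / 32) :
    ∃ x ∈ Set.Icc (0 : ℝ) 1, ∃ k : ℕ → ℤ, (∀ n, |k n| < |k (n + 1)|) ∧
      (∀ n, distZ (x - k n * α) ≤ Real.exp (-δ n * |(k n : ℝ)|)) ∧
      (∀ n, ∀ j : ℤ, |j| < |k (n + 1)| →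
        Real.exp (-δ n * |(k n : ℝ)|) * Real.exp (-η n * |(k n : ℝ)|) *
          Real.exp (-η n * |(j : ℝ)|) < distZ (x - j * α)) ∧
      ∀ i, 0 < f i → w i ≤ distZ (x - z i) := by
  obtain ⟨K₀, hK₀⟩ := (eventually_exp_mul_tsum_le (zero_lt_one (α := ℝ))).exists
  set η' : ℕ → ℝ := fun n => n.casesOn 1 η with hη'
  have hη'0 (n : ℕ) : 0 < η' n := by cases n <;> simp [hη', hη]
  have hstart : CantorStage.Good w (η' 0) (⟨1 / 2, 1 / 2, K₀, Set.univ⟩ : CantorStage ι) := by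
    refine ⟨by norm_num, le_rfl, ?_, hK₀⟩
    simp only [Set.indicator_univ]
    linarith
  have hstep (n : ℕ) (S : CantorStage ι) (hS : S.Good w (η' n)) := S.exists_refines hα (z := z)
    (hd.trans_le (hδ n)) (hη'0 n) (hη'0 (n + 1)) hw hf hwf hfs hS
  choose next hnext using hstep
  let T : (n : ℕ) → {S : CantorStage ι // S.Good w (η' n)} := fun n =>
    Nat.rec ⟨_, hstart⟩ (fun n S => ⟨next n S.1 S.2, (hnext n S.1 S.2).1⟩) n
  have hT (n : ℕ) : (T n).1.Refines α z w f (δ n) (η' n) (T (n + 1)).1 :=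
    (hnext n (T n).1 (T n).2).2
  obtain ⟨x, hx⟩ : (⋂ n, Set.Icc ((T n).1.c - (T n).1.ρ) ((T n).1.c + (T n).1.ρ)).Nonempty := by
    refine IsCompact.nonempty_iInter_of_sequence_nonempty_isCompact_isClosed _ (fun n => ?_)
      (fun n => ?_) isCompact_Icc fun n => isClosed_Icc
    · have h := (hT n).2.2.1
      have h1 := le_abs_self ((T (n + 1)).1.c - (T n).1.c)
      have h2 := neg_abs_le ((T (n + 1)).1.c - (T n).1.c)
      apply Set.Icc_subset_Icc <;> linarith
    · have := (T n).2.1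
      exact Set.nonempty_Icc.mpr (by linarith)
  have hxn (n : ℕ) : distZ (x - (T n).1.c) ≤ (T n).1.ρ := by
    have := Set.mem_iInter.mp hx n
    refine (distZ_le_abs _).trans (abs_le.mpr ⟨?_, ?_⟩)
    · linarith [this.1]
    · linarith [this.2]
  have hx0 : x ∈ Set.Icc ((1 : ℝ) / 2 - 1 / 2) (1 / 2 + 1 / 2) := Set.mem_iInter.mp hx 0
  refine ⟨x, ⟨by linarith [hx0.1], by linarith [hx0.2]⟩, ?_⟩
  have hk (n : ℕ) := (hT n).2.2.2.2.2.1
  choose k m hkK hkc using hk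
  have hkK' (n : ℕ) : |(k n : ℝ)| = (T (n + 1)).1.K := by exact_mod_cast hkK n
  have hKlt (n : ℕ) : (T n).1.K < (T (n + 1)).1.K := (hT n).1
  have hKge (n : ℕ) : n ≤ (T n).1.K := by
    induction n with
    | zero => exact Nat.zero_le _
    | succ n ih => exact ih.trans_lt (hKlt n)
  refine ⟨k, fun n => ?_, fun n => ?_, fun n j hj => ?_, fun i hi => ?_⟩
  · rw [hkK, hkK]; exact_mod_cast hKlt (n + 1)
  · have h1 := hxn (n + 1)
    rw [hkc n, (hT n).2.1, ← hkK' n, ← sub_sub] at h1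
    rw [← distZ_add_int _ (-m n)]
    simpa [sub_eq_add_neg] using h1
  · have h1 := (hT (n + 1)).2.2.2.2.2.2 j (by rw [← hkK]; exact hj)
    rw [(hT n).2.1, ← hkK' n] at h1
    have h2 := distZ_sub_le (T (n + 1 + 1)).1.c x (j * α)
    have h3 := hxn (n + 1 + 1)
    rw [distZ_sub_comm] at h3
    have e : η' (n + 1) = η n := rfl
    rw [e] at h1
    linarith
  · by_contra! hlt
    have hA (n : ℕ) : i ∈ (T n).1.A := by
      induction n with
      | zero => exact Set.mem_univ i
      | succ n ih =>
        rw [(hT n).2.2.2.1]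
        refine ⟨ih, ?_⟩
        have h2 := distZ_sub_le (T (n + 1)).1.c x (z i)
        have h3 := hxn (n + 1)
        rw [distZ_sub_comm] at h3
        rw [Set.mem_ofPred_eq]
        linarith
    obtain ⟨n, hn⟩ := exists_nat_gt (1 / (2 * d * f i))
    have h1 := (hT n).2.2.2.2.1 i (hA (n + 1))
    have hK1 : (n : ℝ) + 1 ≤ (T (n + 1)).1.K := by exact_mod_cast hKge (n + 1)
    have hn0 : (0 : ℝ) ≤ n := by positivity
    have hδn := hδ n
    rw [le_div_iff₀ (by nlinarith)] at h1
    rw [div_lt_iff₀ (by positivity)] at hn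
    have h2 : d * n ≤ δ n * (T (n + 1)).1.K := by
      apply mul_le_mul hδn (by linarith) hn0 (by linarith)
    nlinarith

lemma ofReal_le_resStrength {α x C : ℝ} {δ : ℕ → ℝ} {k : ℕ → ℤ} (hk : ∀ n, |k n| < |k (n + 1)|)
    (hx : ∀ n, distZ (x - k n * α) ≤ Real.exp (-δ n * |(k n : ℝ)|)) (hC : ∀ᶠ n in atTop, C ≤ δ n) :
    ENNReal.ofReal C ≤ resStrength α x := by
  unfold resStrength
  split_ifs with h
  · exact le_top
  · have hmono : StrictMono fun n => |k n| := strictMono_nat_of_lt_succ hk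
    have hinj : Function.Injective k := fun a b hab => hmono.injective (by simp only [hab])
    have htend : Tendsto k atTop cofinite := by
      rw [← Nat.cofinite_eq_atTop]; exact hinj.tendsto_cofinite
    refine Filter.le_limsup_of_frequently_le (htend.frequently (Eventually.frequently ?_))
    filter_upwards [hC, eventually_ge_atTop 1] with n hn hn1
    apply ENNReal.ofReal_le_ofReal
    have hpos : 0 < |k n| := (abs_nonneg (k 0)).trans_lt (hmono hn1)
    have hpos' : (0 : ℝ) < |(k n : ℝ)| := by exact_mod_cast hpos
    have hd : 0 < distZ (x - k n * α) := by
      refine (distZ_nonneg _).lt_of_ne' fun h0 => h ⟨k n, round (x - k n * α), ?_⟩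
      have := abs_eq_zero.mp h0
      linarith
    have h1 := (Real.log_le_iff_le_exp hd).mpr (hx n)
    rw [le_div_iff₀ hpos']
    nlinarith

lemma resStrength_le_ofReal {α x D : ℝ} (hD : 0 ≤ D) {k : ℕ → ℤ} (hk : ∀ n, |k n| < |k (n + 1)|)
    (hx : ∀ n, ∀ j : ℤ, |j| < |k (n + 1)| → Real.exp (-D * |(k n : ℝ)|) *
      Real.exp (-(1 / ((n : ℝ) + 1)) * |(k n : ℝ)|) * Real.exp (-(1 / ((n : ℝ) + 1)) * |(j : ℝ)|) <
        distZ (x - j * α)) :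
    resStrength α x ≤ ENNReal.ofReal D := by
  have hmono : StrictMono fun n => |k n| := strictMono_nat_of_lt_succ hk
  have hlarge (j : ℤ) : ∃ n, |j| < |k n| := by
    have h (n : ℕ) : (n : ℤ) ≤ |k n| := by
      induction n with
      | zero => simp
      | succ n ih => have := hk n; push_cast; omega
    refine ⟨j.natAbs + 1, ?_⟩
    have := h (j.natAbs + 1)
    rw [Int.abs_eq_natAbs j]
    push_cast at this ⊢
    omega
  have hpos (j : ℤ) : 0 < distZ (x - j * α) := by
    obtain ⟨n, hn⟩ := hlarge j
    exact lt_trans (by positivity) (hx n j (hn.trans (hk n)))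
  have hne : ¬ ∃ k m : ℤ, x = (k : ℝ) * α + (m : ℝ) := by
    rintro ⟨j, m, rfl⟩
    have h1 := hpos j
    have h2 := distZ_le_abs_sub_int ((j : ℝ) * α + m - j * α) m
    have e : (j : ℝ) * α + m - j * α - m = 0 := by ring
    rw [e, abs_zero] at h2
    linarith
  unfold resStrength
  rw [if_neg hne]
  refine ENNReal.le_of_forall_pos_le_add fun ε hε _ => ?_
  have hε' : (0 : ℝ) < ε := hε
  obtain ⟨N, hN⟩ := exists_nat_gt (2 / (ε : ℝ))
  refine Filter.limsup_le_of_le (h := ?_)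
  have hfin : ∀ᶠ j : ℤ in cofinite, |k (N + 1)| ≤ |j| := by
    rw [Filter.eventually_cofinite]
    refine (Set.finite_Ioo (-|k (N + 1)|) |k (N + 1)|).subset fun j hj => ?_
    exact abs_lt.mp (not_le.mp hj)
  filter_upwards [hfin] with j hj
  obtain ⟨n, hNn, hn1, hn2⟩ : ∃ n, N + 1 ≤ n ∧ |k n| ≤ |j| ∧ |j| < |k (n + 1)| := by
    have hfind := Nat.find_spec (hlarge j)
    have hlt : N + 1 < Nat.find (hlarge j) := by
      by_contra! hle
      have := hmono.monotone hle
      omega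
    obtain ⟨n, hn⟩ : ∃ n, Nat.find (hlarge j) = n + 1 := Nat.exists_eq_succ_of_ne_zero (by omega)
    rw [hn] at hfind hlt
    exact ⟨n, by omega, not_lt.mp (Nat.find_min (hlarge j) (by omega)), hfind⟩
  have hkpos : 0 < |k n| := (abs_nonneg (k 0)).trans_lt (hmono (by omega : 0 < n))
  have hj0 : (0 : ℝ) < |(j : ℝ)| := by exact_mod_cast hkpos.trans_le hn1
  have hkj : |(k n : ℝ)| ≤ |(j : ℝ)| := by exact_mod_cast hn1
  have hNn' : (N : ℝ) + 1 ≤ n := by exact_mod_cast hNn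
  have hη : 2 * (1 / ((n : ℝ) + 1)) ≤ ε := by
    rw [mul_one_div, div_le_iff₀ (by positivity)]
    rw [div_lt_iff₀ hε'] at hN
    nlinarith
  have hη0 : 0 < 1 / ((n : ℝ) + 1) := by positivity
  have h1 := (hx n j hn2).le
  rw [← Real.exp_add, ← Real.exp_add, ← Real.le_log_iff_exp_le (hpos j)] at h1
  rw [← ENNReal.ofReal_coe_nnreal, ← ENNReal.ofReal_add hD hε'.le]
  apply ENNReal.ofReal_le_ofReal
  rw [div_le_iff₀ hj0]
  nlinarith

/-- A cover whose lengths have small total gauge misses some point of `resSet α δ`. -/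
lemma exists_mem_resSet {α : ℝ} (hα : Irrational α) {δ : ℝ≥0∞} (hδ : 0 < δ) {ι : Type*}
    {z w f : ι → ℝ} (hw : ∀ i, 0 ≤ w i) (hf : ∀ i, 0 ≤ f i)
    (hwf : ∀ i, w i ≤ f i * Real.exp (-(1 / (2 * f i)))) (hfs : Summable f)
    (hws : ∑' i, w i ≤ 1 / 32) :
    ∃ x ∈ resSet α δ, ∀ i, 0 < f i → w i ≤ distZ (x - z i) := by
  rcases eq_or_ne δ ⊤ with rfl | hδt
  · obtain ⟨x, hx01, k, hk, hk1, -, hxz⟩ := exists_resonant_point hα (d := 1) one_pos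
      (δ := fun n => (n : ℝ) + 1) (η := fun _ => 1) (z := z) (fun n => by simp)
      (fun _ => one_pos) hw hf hwf hfs hws
    refine ⟨x, ⟨hx01, ENNReal.eq_top_of_forall_nnreal_le fun C => ?_⟩, hxz⟩
    rw [← ENNReal.ofReal_coe_nnreal]
    refine ofReal_le_resStrength hk hk1 ?_
    filter_upwards [tendsto_natCast_atTop_atTop.eventually_ge_atTop (C : ℝ)] with n hn
    linarith
  · have hD : 0 < δ.toReal := ENNReal.toReal_pos hδ.ne' hδt
    obtain ⟨x, hx01, k, hk, hk1, hk2, hxz⟩ := exists_resonant_point hα hD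
      (δ := fun _ => δ.toReal) (η := fun n => 1 / ((n : ℝ) + 1)) (z := z) (fun n => le_rfl)
      (fun _ => by positivity) hw hf hwf hfs hws
    refine ⟨x, ⟨hx01, ?_⟩, hxz⟩
    rw [← ENNReal.ofReal_toReal hδt]
    exact le_antisymm (resStrength_le_ofReal hD.le hk hk2)
      (ofReal_le_resStrength hk hk1 (Eventually.of_forall fun _ => le_rfl))

lemma omegaS_nonneg {s r : ℝ} (hr : r ≤ 1) : 0 ≤ omegaS s r := by
  unfold omegaS
  split_ifs with h
  · exact Real.rpow_nonneg (by linarith [Real.log_nonpos h.le hr]) _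
  · exact le_rfl

lemma omegaS_one_le_omegaS {s r : ℝ} (hs : s ≤ 1) (hr : r ≤ Real.exp (-1)) :
    omegaS 1 r ≤ omegaS s r := by
  unfold omegaS
  split_ifs with h
  · have := (Real.log_le_iff_le_exp h).mpr hr
    exact Real.rpow_le_rpow_of_exponent_le (by linarith) (by linarith)
  · exact le_rfl

lemma omegaS_one_pos {r : ℝ} (hr0 : 0 < r) (hr1 : r < 1) : 0 < omegaS 1 r := by
  rw [omegaS, if_pos hr0]
  exact Real.rpow_pos_of_pos (by linarith [Real.log_neg hr0 hr1]) _

lemma le_omegaS_one_mul_sqrt {r : ℝ} (hr0 : 0 ≤ r) (hr1 : r < 1) :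
    r ≤ omegaS 1 r * √r ∧ √r = Real.exp (-(1 / (2 * omegaS 1 r))) ∨ r = 0 ∧ omegaS 1 r = 0 := by
  rcases hr0.eq_or_lt with h | h
  · right; simp [omegaS, ← h]
  · left
    set t := -Real.log r with ht
    have ht0 : 0 < t := by linarith [Real.log_neg h hr1]
    have hω : omegaS 1 r = 1 / t := by
      rw [omegaS, if_pos h, ← ht, Real.rpow_neg_one, one_div]
    have hsq : √r = Real.exp (-(t / 2)) := by
      rw [← Real.exp_log h, ← Real.exp_half, ht]; simp [neg_div]
    have hr : r = √r * √r := (Real.mul_self_sqrt h.le).symm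
    have h1 : t * √r ≤ 1 := by
      rw [hsq, Real.exp_neg, ← div_eq_mul_inv, div_le_one (Real.exp_pos _)]
      have h2 : Real.exp (t / 2) = Real.exp (t / 4) ^ 2 := by
        rw [← Real.exp_nat_mul]; congr 1; push_cast; ring
      have h3 := Real.add_one_le_exp (t / 4)
      nlinarith [sq_nonneg (t / 4 - 1)]
    constructor
    · have h4 : √r ≤ 1 / t := by rw [le_div_iff₀ ht0]; linarith
      calc r = √r * √r := hr
        _ ≤ omegaS 1 r * √r := by rw [hω]; gcongr
    · rw [hω, hsq]; congr 1; field_simp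

/-- For irrational `α ∈ [0,1]` and `0 < δ ≤ ∞`, the `ω_s`-Hausdorff measure of `D(δ)`
is infinite for every `0 < s ≤ 1`. -/
theorem hausdorff_omegaS_resSet_eq_top (α : ℝ) (hα : Irrational α)
    (hα01 : α ∈ Set.Icc (0 : ℝ) 1) (δ : ℝ≥0∞) (hδ : 0 < δ)
    (s : ℝ) (hs0 : 0 < s) (hs1 : s ≤ 1) :
    gaugeHaus (omegaS s) (resSet α δ) = ⊤ := by
  refine ENNReal.eq_top_of_forall_nnreal_le fun C => ?_
  set B : ℝ := 1 / (16 * ((C : ℝ) + 1)) with hB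
  have hC0 : (0 : ℝ) ≤ C := C.2
  have hB0 : 0 < B := by positivity
  set ε : ℝ := min (Real.exp (-1)) (B ^ 2) with hε
  have hε0 : 0 < ε := lt_min (Real.exp_pos _) (by positivity)
  refine le_iSup₂_of_le ε hε0 (le_iInf fun a => le_iInf fun b => le_iInf fun hcov =>
    le_iInf fun hab => ?_)
  by_contra! hlt
  have hL0 (i : ℕ) : 0 ≤ b i - a i := by linarith [(hab i).1]
  have hL1 (i : ℕ) : b i - a i ≤ Real.exp (-1) := (hab i).2.trans (min_le_left _ _)
  have hL2 (i : ℕ) : √(b i - a i) ≤ B :=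
    Real.sqrt_le_iff.mpr ⟨hB0.le, (hab i).2.trans (min_le_right _ _)⟩
  have hL3 (i : ℕ) : b i - a i < 1 :=
    (hL1 i).trans_lt (Real.exp_lt_one_iff.mpr (by norm_num))
  have hg0 (i : ℕ) : 0 ≤ omegaS s (b i - a i) := omegaS_nonneg (hL3 i).le
  have hgs : Summable fun i => omegaS s (b i - a i) := by
    have := ENNReal.summable_toReal (hlt.trans ENNReal.coe_lt_top).ne
    simpa only [ENNReal.toReal_ofReal (hg0 _)] using this
  have hgC : ∑' i, omegaS s (b i - a i) ≤ C := by
    rw [← ENNReal.ofReal_tsum_of_nonneg hg0 hgs, ← ENNReal.ofReal_coe_nnreal] at hlt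
    exact ((ENNReal.ofReal_lt_ofReal_iff_of_nonneg (tsum_nonneg hg0)).mp hlt).le
  have hf0 (i : ℕ) : 0 ≤ omegaS 1 (b i - a i) := omegaS_nonneg (hL3 i).le
  have hfg (i : ℕ) := omegaS_one_le_omegaS hs1 (hL1 i)
  have hfs : Summable fun i => omegaS 1 (b i - a i) := Summable.of_nonneg_of_le hf0 hfg hgs
  have hLf (i : ℕ) : b i - a i ≤ omegaS 1 (b i - a i) * B := by
    rcases le_omegaS_one_mul_sqrt (hL0 i) (hL3 i) with h | h
    · exact h.1.trans (mul_le_mul_of_nonneg_left (hL2 i) (hf0 i))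
    · rw [h.1]; have := hf0 i; rw [h.1] at this; positivity
  have hLs : Summable fun i => b i - a i :=
    Summable.of_nonneg_of_le hL0 hLf (hfs.mul_right B)
  have hw0 (i : ℕ) : 0 ≤ (b i - a i) / 2 := by have := hL0 i; positivity
  have hwf (i : ℕ) : (b i - a i) / 2 ≤ omegaS 1 (b i - a i) *
      Real.exp (-(1 / (2 * omegaS 1 (b i - a i)))) := by
    rcases le_omegaS_one_mul_sqrt (hL0 i) (hL3 i) with h | h
    · rw [← h.2]
      linarith [hL0 i, h.1]
    · have h3 : (b i - a i) / 2 = 0 := by rw [h.1, zero_div]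
      rw [h3]
      exact mul_nonneg (hf0 i) (Real.exp_pos _).le
  have hws : ∑' i, (b i - a i) / 2 ≤ 1 / 32 := by
    rw [tsum_div_const]
    have h1 : ∑' i, (b i - a i) ≤ C * B := by
      refine (hLs.tsum_le_tsum hLf (hfs.mul_right B)).trans ?_
      rw [tsum_mul_right]
      exact mul_le_mul_of_nonneg_right ((hfs.tsum_le_tsum hfg hgs).trans hgC) hB0.le
    have h2 : C * B ≤ 1 / 16 := by
      rw [hB, mul_one_div, div_le_div_iff₀ (by positivity) (by norm_num)]
      linarith
    linarith
  obtain ⟨x, hx, hxz⟩ := exists_mem_resSet hα hδ (z := fun i => (a i + b i) / 2) hw0 hf0 hwf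
    hfs hws
  obtain ⟨i, hi⟩ := Set.mem_iUnion.mp (hcov hx)
  have h1 := hxz i (omegaS_one_pos (by linarith [hi.1, hi.2]) (hL3 i))
  have h2 : |x - (a i + b i) / 2| < (b i - a i) / 2 :=
    abs_lt.mpr ⟨by linarith [hi.1], by linarith [hi.2]⟩
  exact absurd (h1.trans (distZ_le_abs _)) (not_le.mpr h2)
end

section
/- Let α ∈ [0,1] be irrational and let 0 < δ ≤ ∞. Then the log-Hausdorff dimension of the exact resonance level set D(δ) equals 1: dim_{H,log}(D(δ)) = 1. -/
open Filter MeasureTheory Set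
open scoped ENNReal NNReal Classical

/-- The log-Hausdorff dimension: `dim_{H,log}(S) = inf {s > 0 : ℋ^{ω_s}(S) < ∞}`. -/
noncomputable def logHausDim (S : Set ℝ) : ℝ :=
  sInf {s : ℝ | 0 < s ∧ gaugeHaus (omegaS s) S < ⊤}


lemma distZ_le_abs_sub (x : ℝ) (m : ℤ) : distZ x ≤ |x - m| := round_le x m

/-- An irrational number has reduced rational approximations of quality `1 / q ^ 2` with
arbitrarily large denominator. -/
lemma Irrational.exists_rat_abs_sub_lt_one_div_den_sq {α : ℝ} (hα : Irrational α) (Q : ℕ) :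
    ∃ r : ℚ, Q ≤ r.den ∧ |α - r| < 1 / (r.den : ℝ) ^ 2 := by
  have h := hα.eventually_forall_le_dist_cast_rat_of_den_le Q
  obtain ⟨ε, hε, h0⟩ := ((h.filter_mono nhdsWithin_le_nhds).and
    (self_mem_nhdsWithin : Set.Ioi (0 : ℝ) ∈ nhdsWithin 0 (Set.Ioi 0))).exists
  have h0' : 0 < ε := h0
  obtain ⟨n, hn⟩ := exists_nat_one_div_lt h0'
  obtain ⟨r, hr, hrn⟩ := Real.exists_rat_abs_sub_le_and_den_le α (Nat.succ_pos n)
  have hd : (1 : ℝ) ≤ r.den := by exact_mod_cast r.den_pos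
  have hrn' : (r.den : ℝ) ≤ n + 1 := by exact_mod_cast hrn
  push_cast at hr
  refine ⟨r, ?_, hr.trans_lt ?_⟩
  · by_contra! hlt
    have h1 := hε r hlt.le
    rw [Real.dist_eq] at h1
    have h2 : 1 / (((n : ℝ) + 1 + 1) * r.den) ≤ 1 / ((n : ℝ) + 1) :=
      one_div_le_one_div_of_le (by positivity) (by nlinarith)
    linarith
  · apply one_div_lt_one_div_of_lt (by positivity)
    nlinarith

/-- There are arbitrarily large `N` for which the nonzero multiples `j * α` with `|j| ≤ 4 * N` stay
at distance at least `1 / (32 * N)` from the integers. -/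
lemma Irrational.exists_le_abs_mul_sub {α : ℝ} (hα : Irrational α) (N₀ : ℕ) :
    ∃ N : ℕ, N₀ ≤ N ∧ 0 < N ∧ ∀ j : ℤ, j ≠ 0 → |j| ≤ 4 * N → ∀ m : ℤ,
      1 / (32 * (N : ℝ)) ≤ |j * α - m| := by
  obtain ⟨r, hr, hrα⟩ := hα.exists_rat_abs_sub_lt_one_div_den_sq (8 * (N₀ + 1))
  set q := r.den with hq
  refine ⟨q / 8, by omega, by omega, fun j hj hjN m => ?_⟩
  have h1 : 8 * (q / 8) ≤ q := by omega
  have h2 : q ≤ 16 * (q / 8) := by omega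
  generalize q / 8 = N at *
  have hqpos : (0 : ℝ) < q := by exact_mod_cast r.den_pos
  have h1' : 8 * (N : ℝ) ≤ q := by exact_mod_cast h1
  have h2' : (q : ℝ) ≤ 16 * N := by exact_mod_cast h2
  have hN : (0 : ℝ) < N := by linarith
  have hjN' : |(j : ℝ)| ≤ 4 * N := by exact_mod_cast hjN
  have hne : j * r.num - m * q ≠ 0 := by
    intro h0
    have hdvd : (q : ℤ) ∣ j * r.num := ⟨m, by linarith⟩
    have hcop : IsCoprime (q : ℤ) r.num := by
      rw [Int.isCoprime_iff_gcd_eq_one, Int.gcd_comm]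
      exact r.reduced
    have hle := Int.le_of_dvd (abs_pos.2 hj) ((dvd_abs _ _).2 (hcop.dvd_of_dvd_mul_right hdvd))
    omega
  have hge : (1 : ℝ) ≤ |(j : ℝ) * r.num - m * q| := by
    exact_mod_cast Int.one_le_abs hne
  have hrq : (r : ℝ) = r.num / q := by rw [hq]; exact Rat.cast_def r
  have h3 : 1 / (q : ℝ) ≤ |j * (r : ℝ) - m| := by
    have : j * (r : ℝ) - m = ((j : ℝ) * r.num - m * q) / q := by rw [hrq]; field_simp
    rw [this, abs_div, abs_of_pos hqpos]
    gcongr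
  have h4 : |(j : ℝ) * (α - r)| ≤ (q / 2) * (1 / (q : ℝ) ^ 2) := by
    rw [abs_mul]
    exact mul_le_mul (by linarith) hrα.le (abs_nonneg _) (by positivity)
  have h5 : (q / 2) * (1 / (q : ℝ) ^ 2) = 1 / q - 1 / (2 * q) := by field_simp; norm_num
  have h6 : 1 / (32 * (N : ℝ)) ≤ 1 / (2 * q) :=
    one_div_le_one_div_of_le (by positivity) (by linarith)
  have h7 : |j * (r : ℝ) - m| ≤ |j * α - m| + |(j : ℝ) * (α - r)| := by
    rw [show j * (r : ℝ) - m = (j * α - m) - j * (α - r) by ring]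
    exact abs_sub _ _
  linarith

/-- Among `q` consecutive multiples of `α` with `q` the denominator of a good rational
approximation, at least `q * L / 2` have fractional part in a given interval of length `L`. -/
lemma le_count_fract_mem_of_den {α : ℝ} {r : ℚ} (hr : |α - r| < 1 / (r.den : ℝ) ^ 2) {u L : ℝ}
    (hu : 0 ≤ u) (huL : u + L ≤ 1) (hL : 8 ≤ r.den * L) (n : ℕ) :
    r.den * L / 2 ≤
      Nat.count (fun j => Int.fract (((n + j : ℕ) : ℝ) * α) ∈ Set.Icc u (u + L)) r.den := by
  set q := r.den with hq
  have hqpos : (0 : ℝ) < q := by exact_mod_cast r.den_pos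
  have hrq : (r : ℝ) = r.num / q := by rw [hq]; exact Rat.cast_def r
  set t : ℤ := ⌊(q : ℝ) * (n * α)⌋ with ht
  have hcop : IsCoprime r.num (q : ℤ) := by
    rw [Int.isCoprime_iff_gcd_eq_one]
    exact r.reduced
  obtain ⟨v, w, hvw⟩ := hcop
  let G : Finset ℤ := Finset.Icc ⌈(q : ℝ) * u + 1⌉ ⌊(q : ℝ) * (u + L) - 2⌋
  have hG : (q : ℝ) * L / 2 ≤ G.card := by
    have h1 : ((⌊(q : ℝ) * (u + L) - 2⌋ + 1 - ⌈(q : ℝ) * u + 1⌉ : ℤ) : ℝ) ≤ G.card := by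
      rw [Int.card_Icc]
      exact_mod_cast Int.self_le_toNat _
    have h2 := Int.lt_floor_add_one ((q : ℝ) * (u + L) - 2)
    have h3 := Int.ceil_lt_add_one ((q : ℝ) * u + 1)
    push_cast at h1
    nlinarith
  refine hG.trans ?_
  rw [Nat.count_eq_card_filter_range]
  norm_cast
  have hqZ : (0 : ℤ) < q := by exact_mod_cast r.den_pos
  have hmod : ∀ g : ℤ, (q : ℤ) ∣ t + (v * (g - t) % q) * r.num - g := by
    intro g
    refine ⟨-(v * (g - t) / q) * r.num - w * (g - t), ?_⟩
    have := Int.emod_add_mul_ediv (v * (g - t)) q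
    linear_combination r.num * this + (g - t) * hvw
  refine Finset.card_le_card_of_injOn (fun g => (v * (g - t) % q).toNat) ?_ ?_
  · intro g hg
    simp only [G, Finset.coe_Icc, Set.mem_Icc, Int.ceil_le, Int.le_floor] at hg
    obtain ⟨hg1, hg2⟩ := hg
    have hj0 := Int.emod_nonneg (v * (g - t)) hqZ.ne'
    have hjq := Int.emod_lt_of_pos (v * (g - t)) hqZ
    obtain ⟨e, he⟩ := hmod g
    dsimp only
    generalize v * (g - t) % (q : ℤ) = jz at *
    obtain ⟨j, rfl⟩ := Int.eq_ofNat_of_zero_le hj0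
    simp only [Int.toNat_natCast, Finset.coe_filter, Finset.mem_range, Set.mem_ofPred_eq]
    refine ⟨by omega, ?_⟩
    have hjq' : (j : ℝ) ≤ q := by exact_mod_cast hjq.le
    have hfl := Int.floor_le ((q : ℝ) * (n * α))
    have hfl' := Int.lt_floor_add_one ((q : ℝ) * (n * α))
    rw [← ht] at hfl hfl'
    have he' : (t : ℝ) + j * r.num - g = q * e := by exact_mod_cast he
    have hb : |(q : ℝ) * (j * (α - r))| ≤ 1 := by
      rw [abs_mul, abs_mul, abs_of_pos hqpos, Nat.abs_cast]
      calc (q : ℝ) * (j * |α - r|) ≤ q * (q * (1 / (q : ℝ) ^ 2)) := by gcongr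
        _ = 1 := by field_simp
    rw [abs_le] at hb
    have hrq' : (q : ℝ) * r = r.num := by rw [hrq]; field_simp
    have key : (q : ℝ) * (((n + j : ℕ) : ℝ) * α - e) =
        g + (q * (n * α) - t) + q * (j * (α - r)) := by
      push_cast
      linear_combination he' + j * hrq'
    have hlow : u ≤ ((n + j : ℕ) : ℝ) * α - e := by
      refine le_of_mul_le_mul_left ?_ hqpos
      linarith
    have hupp : ((n + j : ℕ) : ℝ) * α - e < u + L := by
      refine lt_of_mul_lt_mul_left ?_ hqpos.le
      linarith
    have hfr : Int.fract (((n + j : ℕ) : ℝ) * α) = ((n + j : ℕ) : ℝ) * α - e := by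
      rw [Int.fract_eq_iff]
      exact ⟨by linarith, by linarith, e, by ring⟩
    rw [hfr]
    exact ⟨hlow, hupp.le⟩
  · intro g hg g' hg' hgg
    simp only [G, Finset.coe_Icc, Set.mem_Icc, Int.ceil_le, Int.le_floor] at hg hg'
    have h1 := hmod g
    have h2 := hmod g'
    have hj0 := Int.emod_nonneg (v * (g - t)) hqZ.ne'
    have hj0' := Int.emod_nonneg (v * (g' - t)) hqZ.ne'
    have heq : v * (g - t) % q = v * (g' - t) % q := by
      simp only at hgg
      omega
    rw [heq] at h1
    have h3 := dvd_sub h1 h2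
    rw [show t + (v * (g' - t) % q) * r.num - g - (t + (v * (g' - t) % q) * r.num - g') = g' - g
      by ring] at h3
    by_contra hne
    have h4 := Int.le_of_dvd (abs_pos.2 (sub_ne_zero.2 (Ne.symm hne))) ((dvd_abs _ _).2 h3)
    have h5 : (q : ℝ) ≤ |(g' : ℝ) - g| := by exact_mod_cast h4
    have h6 : |(g' : ℝ) - g| < q := by
      rw [abs_lt]
      constructor <;> nlinarith
    linarith

/-- The multiples `k * α` with `N ≤ k < 2 * N` visit an interval of length `L` at least `L * N / 4`
times, once `N` is large. -/
lemma Irrational.exists_le_card_fract_mem {α : ℝ} (hα : Irrational α) {u L : ℝ}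
    (hu : 0 ≤ u) (hL : 0 < L) (huL : u + L ≤ 1) :
    ∃ N₀ : ℕ, ∀ N : ℕ, N₀ ≤ N →
      L * N / 4 ≤ (((Finset.Ico N (2 * N)).filter
        (fun k : ℕ => Int.fract ((k : ℝ) * α) ∈ Set.Icc u (u + L))).card : ℝ) := by
  obtain ⟨r, hr, hrα⟩ := hα.exists_rat_abs_sub_lt_one_div_den_sq (⌈8 / L⌉₊)
  have hqL : 8 ≤ (r.den : ℝ) * L := by
    have h1 : 8 / L ≤ r.den := (Nat.le_ceil _).trans (by exact_mod_cast hr)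
    rwa [div_le_iff₀ hL] at h1
  refine ⟨r.den, fun N hN => ?_⟩
  set P : ℕ → Prop := fun k => Int.fract ((k : ℝ) * α) ∈ Set.Icc u (u + L) with hP
  have hq := r.den_pos
  have hwin : ∀ M : ℕ, M * (r.den * L / 2) ≤
      (Nat.count P (N + M * r.den) : ℝ) - Nat.count P N := by
    intro M
    induction M with
    | zero => simp
    | succ M ih =>
      have h1 := le_count_fract_mem_of_den hrα hu huL hqL (N + M * r.den)
      have h2 : Nat.count P (N + (M + 1) * r.den) = Nat.count P (N + M * r.den) +
          Nat.count (fun j => P (N + M * r.den + j)) r.den := by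
        rw [← Nat.count_add]
        congr 1
        ring
      rw [h2]
      push_cast at h1 ⊢
      simp only [hP] at ih ⊢
      push_cast at ih ⊢
      linarith
  have h1 := hwin (N / r.den)
  have h2 : (Nat.count P (N + N / r.den * r.den) : ℝ) ≤ Nat.count P (2 * N) := by
    have := Nat.div_mul_le_self N r.den
    exact_mod_cast Nat.count_monotone P (by omega)
  have h3 : Nat.count P (2 * N) =
      Nat.count P N + ((Finset.Ico N (2 * N)).filter P).card := by
    rw [Nat.count_eq_card_filter_range, Nat.count_eq_card_filter_range,
      ← Finset.card_union_of_disjoint]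
    · rw [← Finset.filter_union]
      congr 2
      ext k
      simp
      omega
    · refine Finset.disjoint_filter_filter ?_
      rw [Finset.disjoint_left]
      intro k hk hk'
      simp at hk hk'
      omega
  have h4 : (N : ℝ) ≤ 2 * ((N / r.den : ℕ) * r.den) := by
    have h5 : N ≤ 2 * (N / r.den * r.den) := by
      have := Nat.div_add_mod N r.den
      have := Nat.mod_lt N hq
      have h6 : 1 ≤ N / r.den := Nat.div_pos hN hq
      nlinarith
    exact_mod_cast h5
  rw [h3] at h2
  push_cast at h2
  nlinarith

/-- A `σ`-separated family of points in an interval of length `d` has at most `d / σ + 1` members. -/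
lemma card_le_of_separated {A : Finset ℕ} {v : ℕ → ℝ} {σ c d : ℝ} (hσ : 0 < σ) (hd : 0 ≤ d)
    (hsep : ∀ k ∈ A, ∀ l ∈ A, k ≠ l → σ ≤ |v k - v l|)
    (hmem : ∀ k ∈ A, v k ∈ Set.Icc c (c + d)) : (A.card : ℝ) ≤ d / σ + 1 := by
  have h1 : A.card ≤ (Finset.range (⌊d / σ⌋₊ + 1)).card := by
    refine Finset.card_le_card_of_injOn (fun k => ⌊(v k - c) / σ⌋₊) ?_ ?_
    · intro k hk
      have := (hmem k hk).2
      simp only [Finset.coe_range, Set.mem_Iio, Nat.lt_succ_iff]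
      exact Nat.floor_mono (div_le_div_of_nonneg_right (by linarith) hσ.le)
    · intro k hk l hl hkl
      by_contra hne
      have hs := hsep k hk l hl hne
      have hk0 : 0 ≤ (v k - c) / σ := div_nonneg (by linarith [(hmem k hk).1]) hσ.le
      have hl0 : 0 ≤ (v l - c) / σ := div_nonneg (by linarith [(hmem l hl).1]) hσ.le
      have h1 := Nat.floor_le hk0
      have h2 := Nat.lt_floor_add_one ((v k - c) / σ)
      have h3 := Nat.floor_le hl0
      have h4 := Nat.lt_floor_add_one ((v l - c) / σ)
      simp only at hkl
      rw [hkl] at h1 h2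
      have h5 : |(v k - c) / σ - (v l - c) / σ| < 1 := by
        rw [abs_lt]
        constructor <;> linarith
      rw [← sub_div, abs_div, abs_of_pos hσ, div_lt_one hσ] at h5
      rw [show v k - c - (v l - c) = v k - v l by ring] at h5
      linarith
  rw [Finset.card_range] at h1
  calc (A.card : ℝ) ≤ ((⌊d / σ⌋₊ + 1 : ℕ) : ℝ) := by exact_mod_cast h1
    _ ≤ d / σ + 1 := by
      push_cast
      linarith [Nat.floor_le (div_nonneg hd hσ.le)]

/-- The total length of the intervals `(a i, b i)` that meet `[u, v]`. -/
noncomputable def coverMass (a b : ℕ → ℝ) (u v : ℝ) : ℝ≥0∞ :=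
  ∑' i, if (Set.Ioo (a i) (b i) ∩ Set.Icc u v).Nonempty then ENNReal.ofReal (b i - a i) else 0

/-- An interval of length `d` meets at most `(d + η) / σ + 1` of the intervals `[y k + θ k, y k + r k]`
attached to `σ`-separated points `y k`. -/
lemma card_filter_Ioo_inter_nonempty_le {A : Finset ℕ} {y θ r : ℕ → ℝ} {σ η a b : ℝ} (hσ : 0 < σ)
    (hab : a ≤ b) (hη : 0 ≤ η) (hθ : ∀ k ∈ A, 0 ≤ θ k) (hr : ∀ k ∈ A, r k ≤ η)
    (hsep : ∀ k ∈ A, ∀ l ∈ A, k ≠ l → σ ≤ |y k - y l|) :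
    ((A.filter (fun k =>
      (Set.Ioo a b ∩ Set.Icc (y k + θ k) (y k + r k)).Nonempty)).card : ℝ) ≤
      (b - a + η) / σ + 1 := by
  refine card_le_of_separated (v := y) (c := a - η) hσ (by linarith) ?_ ?_
  · intro k hk l hl
    exact hsep k (Finset.mem_filter.1 hk).1 l (Finset.mem_filter.1 hl).1
  · intro k hk
    obtain ⟨hkA, x, hx, hx'⟩ := Finset.mem_filter.1 hk
    have := hθ k hkA
    have := hr k hkA
    obtain ⟨h1, h2⟩ := hx
    obtain ⟨h3, h4⟩ := hx'
    constructor <;> linarith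

lemma sum_tsum_ite_eq_tsum_card_mul (A : Finset ℕ) (P : ℕ → ℕ → Prop) [∀ i k, Decidable (P i k)]
    (f : ℕ → ℝ≥0∞) :
    ∑ k ∈ A, ∑' i, (if P i k then f i else 0) = ∑' i, ((A.filter (P i)).card : ℝ≥0∞) * f i := by
  rw [← Summable.tsum_finsetSum (fun _ _ => ENNReal.summable)]
  congr 1
  ext i
  rw [← Finset.sum_filter, Finset.sum_const, nsmul_eq_mul]

/-- Selection of one of the intervals `[y k + r k / 2, y k + r k]`, where `y k` is the fractional
part of `k * α`, that avoids all long members of a cover and all prescribed neighbourhoods of the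
orbit, and meets only a small part of the cover in terms of the weights `w`. -/
lemma exists_mem_avoiding {α : ℝ} {N : ℕ} (hN : 0 < N) {σ : ℝ} (hσ : σ = 1 / (32 * (N : ℝ)))
    (hsep : ∀ j : ℤ, j ≠ 0 → |j| ≤ 4 * N → ∀ m : ℤ, σ ≤ |j * α - m|)
    {A : Finset ℕ} (hA : A ⊆ Finset.Ico N (2 * N)) {u ℓ : ℝ} (hℓ : 0 < ℓ)
    (hcard : ℓ * N / 8 ≤ A.card) {r : ℕ → ℝ} (hr : ∀ k ∈ A, 0 ≤ r k ∧ r k ≤ σ / 4)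
    (hsub : ∀ k ∈ A, Set.Icc (Int.fract (k * α) + r k / 2) (Int.fract (k * α) + r k) ⊆
      Set.Icc u (u + ℓ))
    {a b : ℕ → ℝ} (hab : ∀ i, a i ≤ b i)
    (hmass : coverMass a b u (u + ℓ) ≤ ENNReal.ofReal (ℓ / 8192))
    {Z : Finset ℤ} (hZ : ∀ z ∈ Z, |z| ≤ 2 * N) {g : ℤ → ℝ} (hg : ∀ z, 0 ≤ g z)
    (hgZ : ∑ z ∈ Z, g z ≤ ℓ / 8192)
    {w : ℕ → ℝ≥0∞} {T W : ℝ} (hw : ∑' i, w i ≤ ENNReal.ofReal T) (hW : 0 < W)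
    (hTW : 16 * T ≤ W * (ℓ * N)) :
    ∃ k ∈ A,
      (∀ i, σ / 4 ≤ b i - a i →
        ¬ (Set.Ioo (a i) (b i) ∩
          Set.Icc (Int.fract (k * α) + r k / 2) (Int.fract (k * α) + r k)).Nonempty) ∧
      (∀ z ∈ Z, z ≠ k →
        ∀ x ∈ Set.Icc (Int.fract (k * α) + r k / 2) (Int.fract (k * α) + r k),
          g z ≤ distZ (x - z * α)) ∧
      ∑' i, (if (Set.Ioo (a i) (b i) ∩
        Set.Icc (Int.fract (k * α) + r k / 2) (Int.fract (k * α) + r k)).Nonempty then w i else 0)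
        ≤ ENNReal.ofReal W := by
  have hN' : (0 : ℝ) < N := by exact_mod_cast hN
  have hσ0 : 0 < σ := by rw [hσ]; positivity
  have hσN : 1 / σ = 32 * N := by rw [hσ]; simp
  set y : ℕ → ℝ := fun k => Int.fract (k * α) with hy
  have hAN : ∀ k ∈ A, N ≤ k ∧ k < 2 * N := fun k hk => by simpa using hA hk
  have hysep : ∀ k ∈ A, ∀ l ∈ A, k ≠ l → σ ≤ |y k - y l| := by
    intro k hk l hl hkl
    have h1 := hAN k hk
    have h2 := hAN l hl
    have h3 := hsep ((k : ℤ) - l) (by omega) (by rw [abs_le]; omega) (⌊k * α⌋ - ⌊l * α⌋)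
    convert h3 using 2
    simp only [hy, Int.fract]
    push_cast
    ring
  let meets : ℕ → ℕ → Prop := fun i k =>
    (Set.Ioo (a i) (b i) ∩ Set.Icc (y k + r k / 2) (y k + r k)).Nonempty
  have hhit : ∀ i, ((A.filter (meets i)).card : ℝ) ≤ (b i - a i + σ / 4) / σ + 1 := fun i =>
    card_filter_Ioo_inter_nonempty_le (θ := fun k => r k / 2) hσ0 (hab i) (by positivity)
      (fun k hk => by have := (hr k hk).1; positivity) (fun k hk => (hr k hk).2) hysep
  let long : ℕ → Prop := fun i => σ / 4 ≤ b i - a i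
  let bad : ℤ → ℕ → Prop := fun z k =>
    z ≠ k ∧ ∃ x ∈ Set.Icc (y k + r k / 2) (y k + r k), distZ (x - z * α) < g z
  have hcost1 : ∑ k ∈ A, ∑' i, (if long i ∧ meets i k then (1 : ℝ≥0∞) else 0) ≤
      ENNReal.ofReal (ℓ * N * (192 / 8192)) := by
    rw [sum_tsum_ite_eq_tsum_card_mul A (fun i k => long i ∧ meets i k) (fun _ => 1)]
    calc ∑' i, ((A.filter (fun k => long i ∧ meets i k)).card : ℝ≥0∞) * 1
        ≤ ∑' i, ENNReal.ofReal (6 / σ) * (if (Set.Ioo (a i) (b i) ∩ Set.Icc u (u + ℓ)).Nonempty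
            then ENNReal.ofReal (b i - a i) else 0) := by
          refine ENNReal.tsum_le_tsum fun i => ?_
          rw [mul_one]
          by_cases hne : (A.filter (fun k => long i ∧ meets i k)).Nonempty
          · obtain ⟨k, hk⟩ := hne
            obtain ⟨hkA, hlong, x, hx, hx'⟩ := Finset.mem_filter.1 hk
            rw [if_pos ⟨x, hx, hsub k hkA hx'⟩, ← ENNReal.ofReal_mul (by positivity),
              ← ENNReal.ofReal_natCast]
            refine ENNReal.ofReal_le_ofReal ?_
            have h1 : (A.filter (fun k => long i ∧ meets i k)).card ≤ (A.filter (meets i)).card :=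
              Finset.card_le_card (Finset.monotone_filter_right _ fun k _ h => h.2)
            have h2 : ((A.filter (fun k => long i ∧ meets i k)).card : ℝ) ≤
              (A.filter (meets i)).card := by exact_mod_cast h1
            refine (h2.trans (hhit i)).trans ?_
            have h3 : σ / 4 ≤ b i - a i := hlong
            rw [div_add_one hσ0.ne', div_mul_eq_mul_div]
            refine div_le_div_of_nonneg_right ?_ hσ0.le
            linarith
          · rw [Finset.not_nonempty_iff_eq_empty.1 hne]
            simp
      _ = ENNReal.ofReal (6 / σ) * coverMass a b u (u + ℓ) := by
          rw [ENNReal.tsum_mul_left, coverMass]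
      _ ≤ ENNReal.ofReal (6 / σ) * ENNReal.ofReal (ℓ / 8192) := by gcongr
      _ = ENNReal.ofReal (ℓ * N * (192 / 8192)) := by
          rw [← ENNReal.ofReal_mul (by positivity)]
          congr 1
          rw [show 6 / σ = 6 * (1 / σ) by ring, hσN]
          ring
  have hcost2 : ∑ k ∈ A, ∑ z ∈ Z, (if bad z k then (1 : ℝ≥0∞) else 0) ≤
      ENNReal.ofReal (ℓ * N * (256 / 8192)) := by
    rw [Finset.sum_comm]
    calc ∑ z ∈ Z, ∑ k ∈ A, (if bad z k then (1 : ℝ≥0∞) else 0)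
        ≤ ∑ z ∈ Z, ENNReal.ofReal (8 / σ * g z) := by
          refine Finset.sum_le_sum fun z hz => ?_
          rw [← Finset.sum_filter, Finset.sum_const, nsmul_eq_mul, mul_one,
            ← ENNReal.ofReal_natCast]
          refine ENNReal.ofReal_le_ofReal ?_
          have hzN := hZ z hz
          have hclose : ∀ k ∈ A.filter (bad z), distZ (((k : ℝ) - z) * α) ≤ g z + σ / 4 := by
            intro k hk
            obtain ⟨hkA, hzk, x, hx, hxg⟩ := Finset.mem_filter.1 hk
            have h1 := distZ_le_abs_sub (((k : ℝ) - z) * α) (⌊k * α⌋ + round (x - z * α))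
            have h2 : ((k : ℝ) - z) * α - ((⌊k * α⌋ + round (x - z * α) : ℤ) : ℝ) =
                (x - z * α - round (x - z * α)) - (x - y k) := by
              simp only [hy, Int.fract]
              push_cast
              ring
            rw [h2] at h1
            have h3 : |x - y k| ≤ σ / 4 := by
              have := hr k hkA
              obtain ⟨h4, h5⟩ := hx
              rw [abs_le]
              constructor <;> linarith
            have h4 := abs_sub (x - z * α - round (x - z * α)) (x - y k)
            have h5 : |x - z * α - round (x - z * α)| < g z := hxg
            linarith
          by_cases hne : (A.filter (bad z)).Nonempty
          · have hgσ : σ / 4 ≤ g z := by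
              obtain ⟨k, hk⟩ := hne
              have h1 := hclose k hk
              obtain ⟨hkA, hzk, -⟩ := Finset.mem_filter.1 hk
              have h2 := hAN k hkA
              rw [abs_le] at hzN
              have h3 := hsep ((k : ℤ) - z) (by omega) (by rw [abs_le]; omega)
                (round (((k : ℝ) - z) * α))
              push_cast at h3
              have h4 : σ ≤ distZ (((k : ℝ) - z) * α) := h3
              linarith
            have h1 := card_le_of_separated (A := A.filter (bad z))
              (v := fun k => ((k : ℝ) - z) * α - round (((k : ℝ) - z) * α))
              (c := -(2 * g z)) (d := 4 * g z) hσ0 (by linarith [hg z]) ?_ ?_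
            · refine h1.trans ?_
              rw [div_add_one hσ0.ne', div_mul_eq_mul_div]
              refine div_le_div_of_nonneg_right ?_ hσ0.le
              linarith
            · intro k hk l hl hkl
              have h1 := hAN k (Finset.mem_filter.1 hk).1
              have h2 := hAN l (Finset.mem_filter.1 hl).1
              have h3 := hsep ((k : ℤ) - l) (by omega) (by rw [abs_le]; omega)
                (round (((k : ℝ) - z) * α) - round (((l : ℝ) - z) * α))
              convert h3 using 2
              push_cast
              ring
            · intro k hk
              have h1 : |((k : ℝ) - z) * α - round (((k : ℝ) - z) * α)| ≤ g z + σ / 4 :=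
                hclose k hk
              rw [abs_le] at h1
              constructor <;> linarith
          · rw [Finset.not_nonempty_iff_eq_empty.1 hne]
            simp only [Finset.card_empty, Nat.cast_zero]
            have := hg z
            positivity
      _ = ENNReal.ofReal (8 / σ * ∑ z ∈ Z, g z) := by
          rw [Finset.mul_sum, ENNReal.ofReal_sum_of_nonneg]
          intro z _
          have := hg z
          positivity
      _ ≤ ENNReal.ofReal (ℓ * N * (256 / 8192)) := by
          refine ENNReal.ofReal_le_ofReal ?_
          rw [show 8 / σ = 8 * (1 / σ) by ring, hσN]
          nlinarith
  have hcost3 : ∑ k ∈ A, (∑' i, (if ¬ long i ∧ meets i k then w i else 0)) / ENNReal.ofReal W ≤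
      ENNReal.ofReal (ℓ * N / 16) := by
    simp only [div_eq_mul_inv (_ : ℝ≥0∞)]
    rw [← Finset.sum_mul, ← div_eq_mul_inv,
      sum_tsum_ite_eq_tsum_card_mul A (fun i k => ¬ long i ∧ meets i k) w]
    have h1 : ∑' i, ((A.filter (fun k => ¬ long i ∧ meets i k)).card : ℝ≥0∞) * w i ≤
        ENNReal.ofReal T := by
      refine (ENNReal.tsum_le_tsum fun i => ?_).trans hw
      refine mul_le_of_le_one_left (zero_le) ?_
      by_cases hlong : long i
      · simp [hlong]
      · have h2 : (A.filter (fun k => ¬ long i ∧ meets i k)).card ≤ (A.filter (meets i)).card :=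
          Finset.card_le_card (Finset.monotone_filter_right _ fun k _ h => h.2)
        have h3 : b i - a i < σ / 4 := not_le.1 hlong
        have h4 : (b i - a i + σ / 4) / σ < 1 := by
          rw [div_lt_one hσ0]
          linarith
        have h5 : ((A.filter (meets i)).card : ℝ) < 2 := by linarith [hhit i]
        have h6 : (A.filter (meets i)).card < 2 := by exact_mod_cast h5
        exact_mod_cast (by omega : (A.filter (fun k => ¬ long i ∧ meets i k)).card ≤ 1)
    calc _ ≤ ENNReal.ofReal T / ENNReal.ofReal W := by gcongr
      _ = ENNReal.ofReal (T / W) := (ENNReal.ofReal_div_of_pos hW).symm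
      _ ≤ ENNReal.ofReal (ℓ * N / 16) := by
          refine ENNReal.ofReal_le_ofReal ?_
          rw [div_le_iff₀ hW]
          linarith
  have hlt : ∑ k ∈ A, (∑' i, (if long i ∧ meets i k then (1 : ℝ≥0∞) else 0) +
      ∑ z ∈ Z, (if bad z k then (1 : ℝ≥0∞) else 0) +
      (∑' i, (if ¬ long i ∧ meets i k then w i else 0)) / ENNReal.ofReal W) < ∑ k ∈ A, 1 := by
    rw [Finset.sum_add_distrib, Finset.sum_add_distrib]
    refine (add_le_add (add_le_add hcost1 hcost2) hcost3).trans_lt ?_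
    rw [← ENNReal.ofReal_add (by positivity) (by positivity),
      ← ENNReal.ofReal_add (by positivity) (by positivity), Finset.sum_const, nsmul_eq_mul,
      mul_one, ← ENNReal.ofReal_natCast]
    refine (ENNReal.ofReal_lt_ofReal_iff_of_nonneg (by positivity)).2 ?_
    have : 0 < ℓ * N := by positivity
    linarith
  obtain ⟨k, hkA, hk⟩ := Finset.exists_lt_of_sum_lt hlt
  have hk1 : ∑' i, (if long i ∧ meets i k then (1 : ℝ≥0∞) else 0) < 1 :=
    (le_self_add.trans le_self_add).trans_lt hk
  have hk2 : ∑ z ∈ Z, (if bad z k then (1 : ℝ≥0∞) else 0) < 1 :=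
    (le_add_self.trans le_self_add).trans_lt hk
  have hk3 : (∑' i, (if ¬ long i ∧ meets i k then w i else 0)) / ENNReal.ofReal W < 1 :=
    le_add_self.trans_lt hk
  have hlong : ∀ i, long i → ¬ meets i k := by
    intro i hi hm
    have h1 := ENNReal.le_tsum (f := fun i => if long i ∧ meets i k then (1 : ℝ≥0∞) else 0) i
    simp only [hi, hm, and_self, if_true] at h1
    exact absurd hk1 (not_lt.2 h1)
  refine ⟨k, hkA, hlong, ?_, ?_⟩
  · intro z hz hzk x hx
    by_contra! hlt
    have h1 := Finset.single_le_sum (f := fun z => if bad z k then (1 : ℝ≥0∞) else 0)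
      (fun _ _ => zero_le) hz
    have hb : bad z k := ⟨hzk, x, hx, hlt⟩
    simp only [hb, if_true] at h1
    exact absurd hk2 (not_lt.2 h1)
  · have h1 : ∑' i, (if ¬ long i ∧ meets i k then w i else 0) ≤ ENNReal.ofReal W := by
      rw [ENNReal.div_lt_iff (by simp [hW]) (by simp), one_mul] at hk3
      exact hk3.le
    refine le_trans (ENNReal.tsum_le_tsum fun i => ?_) h1
    change (if meets i k then w i else 0) ≤ _
    by_cases hm : meets i k
    · have : ¬ long i := fun hl => hlong i hl hm
      simp [hm, this]
    · simp [hm]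

/-- The radius `exp (-c n ^ p)` used to approximate by `n * α`. -/
noncomputable def resRadius (c p : ℝ) (n : ℕ) : ℝ := Real.exp (-(c * (n : ℝ) ^ p))

/-- The radius of the neighbourhood of `z * α` that is kept clear. -/
noncomputable def guardRadius (c p : ℝ) (z : ℤ) : ℝ :=
  resRadius c p z.natAbs / (z.natAbs : ℝ) ^ 2

lemma resRadius_pos (c p : ℝ) (n : ℕ) : 0 < resRadius c p n := Real.exp_pos _

lemma guardRadius_nonneg (c p : ℝ) (z : ℤ) : 0 ≤ guardRadius c p z :=
  div_nonneg (resRadius_pos _ _ _).le (by positivity)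

lemma resRadius_antitone {c p : ℝ} (hc : 0 < c) (hp : 1 ≤ p) : Antitone (resRadius c p) := by
  intro m n hmn
  refine Real.exp_le_exp.2 (neg_le_neg ?_)
  gcongr

lemma resRadius_le_exp {c p : ℝ} (hc : 0 < c) (hp : 1 ≤ p) (n : ℕ) :
    resRadius c p n ≤ Real.exp (-(c * n)) := by
  refine Real.exp_le_exp.2 (neg_le_neg (mul_le_mul_of_nonneg_left ?_ hc.le))
  rcases Nat.eq_zero_or_pos n with rfl | hn
  · simp only [Nat.cast_zero]
    positivity
  · exact Real.self_le_rpow_of_one_le (by exact_mod_cast hn) hp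

/-- The integers `z` with `K < |z| ≤ M`. -/
noncomputable def intShell (K M : ℕ) : Finset ℤ :=
  (Finset.Ioc K M).image (fun n : ℕ => (n : ℤ)) ∪ (Finset.Ioc K M).image (fun n : ℕ => -(n : ℤ))

lemma mem_intShell {K M : ℕ} {z : ℤ} : z ∈ intShell K M ↔ K < z.natAbs ∧ z.natAbs ≤ M := by
  simp only [intShell, Finset.mem_union, Finset.mem_image, Finset.mem_Ioc]
  constructor
  · rintro (⟨n, hn, rfl⟩ | ⟨n, hn, rfl⟩) <;> omega
  · intro h
    rcases le_total 0 z with hz | hz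
    · exact Or.inl ⟨z.natAbs, h, by omega⟩
    · exact Or.inr ⟨z.natAbs, h, by omega⟩

lemma sum_guardRadius_intShell_le {c p : ℝ} (hc : 0 < c) (hp : 1 ≤ p) {K M : ℕ} (hK : 1 ≤ K)
    (hKM : K ≤ M) :
    ∑ z ∈ intShell K M, guardRadius c p z ≤ 2 * resRadius c p K / K := by
  have hsum : ∑ n ∈ Finset.Ioc K M, resRadius c p n / (n : ℝ) ^ 2 ≤ resRadius c p K / K := by
    calc ∑ n ∈ Finset.Ioc K M, resRadius c p n / (n : ℝ) ^ 2
        ≤ ∑ n ∈ Finset.Ioc K M, resRadius c p K * ((n : ℝ) ^ 2)⁻¹ := by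
          refine Finset.sum_le_sum fun n hn => ?_
          rw [div_eq_mul_inv]
          have := resRadius_antitone hc hp (Finset.mem_Ioc.1 hn).1.le
          gcongr
      _ = resRadius c p K * ∑ n ∈ Finset.Ioc K M, ((n : ℝ) ^ 2)⁻¹ := by rw [Finset.mul_sum]
      _ ≤ resRadius c p K * (K : ℝ)⁻¹ := by
          have h1 := sum_Ioc_inv_sq_le_sub (α := ℝ) (by omega : K ≠ 0) hKM
          have h2 : (0 : ℝ) ≤ (M : ℝ)⁻¹ := by positivity
          exact mul_le_mul_of_nonneg_left (by linarith) (resRadius_pos _ _ _).le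
      _ = resRadius c p K / K := (div_eq_mul_inv _ _).symm
  rw [intShell, Finset.sum_union, Finset.sum_image, Finset.sum_image]
  · simp only [guardRadius, Int.natAbs_natCast, Int.natAbs_neg]
    rw [mul_div_assoc]
    linarith
  · intro m _ n _ h
    simpa using h
  · intro m _ n _ h
    simpa using h
  · rw [Finset.disjoint_left]
    intro z hz hz'
    simp only [Finset.mem_image, Finset.mem_Ioc] at hz hz'
    omega

/-- Growth comparison: the loss in the averaging argument beats the size of the next radius. -/
lemma eventually_exp_neg_le_resRadius {c p s D : ℝ} (hp : 1 ≤ p) (hs : 0 < s)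
    (hps : p * s < 1) (hD : 0 < D) :
    ∀ᶠ N : ℕ in atTop,
      Real.exp (-((D / (N : ℝ)) ^ (-1 / s) / 2)) ≤ resRadius c p (2 * N) / 16384 := by
  have hq : 0 < 1 / s - p := by
    rw [sub_pos, lt_div_iff₀ hs]
    exact hps
  have h1 : Tendsto (fun x : ℝ => D ^ (-1 / s) / 2 * x ^ (1 / s - p) - c * 2 ^ p) atTop atTop :=
    tendsto_atTop_add_const_right _ _
      ((tendsto_rpow_atTop hq).const_mul_atTop (by positivity))
  have h2 : Tendsto (fun x : ℝ => x ^ p * (D ^ (-1 / s) / 2 * x ^ (1 / s - p) - c * 2 ^ p))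
      atTop atTop := (tendsto_rpow_atTop (by linarith)).atTop_mul_atTop₀ h1
  have h3 := (h2.comp tendsto_natCast_atTop_atTop).eventually_ge_atTop (Real.log 16384)
  filter_upwards [h3, eventually_ge_atTop 1] with N hN hN1
  have hN0 : (0 : ℝ) < N := by exact_mod_cast hN1
  simp only [Function.comp_apply] at hN
  rw [le_div_iff₀ (by norm_num), ← Real.exp_log (by norm_num : (0 : ℝ) < 16384), ← Real.exp_add,
    resRadius, Real.exp_le_exp]
  have h4 : (D / (N : ℝ)) ^ (-1 / s) = D ^ (-1 / s) * (N : ℝ) ^ (1 / s) := by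
    rw [Real.div_rpow hD.le hN0.le, div_eq_mul_inv, ← Real.rpow_neg hN0.le]
    congr 2
    ring
  have h5 : (N : ℝ) ^ (1 / s) = (N : ℝ) ^ p * (N : ℝ) ^ (1 / s - p) := by
    rw [← Real.rpow_add hN0]
    congr 1
    ring
  have h6 : ((2 * N : ℕ) : ℝ) ^ p = 2 ^ p * (N : ℝ) ^ p := by
    push_cast
    exact Real.mul_rpow (by norm_num) hN0.le
  rw [h4, h5, h6]
  linarith

/-- One step of the nested interval construction. -/
lemma Irrational.exists_next_interval {α : ℝ} (hα : Irrational α) {c p s T : ℝ} (hc : 0 < c)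
    (hp : 1 ≤ p) (hs : 0 < s) (hps : p * s < 1) (hT : 0 < T)
    {a b : ℕ → ℝ} (hab : ∀ i, a i ≤ b i) {w : ℕ → ℝ≥0∞} (hw : ∑' i, w i ≤ ENNReal.ofReal T)
    (hlen : ∀ i, ∀ W : ℝ, 0 < W → W ≤ 1 → w i ≤ ENNReal.ofReal W →
      ENNReal.ofReal (b i - a i) ≤ w i * ENNReal.ofReal (Real.exp (-(W ^ (-1 / s) / 2))))
    {u ℓ : ℝ} (hu : 0 ≤ u) (hℓ : 0 < ℓ) (huℓ : u + ℓ ≤ 1)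
    (hmass : coverMass a b u (u + ℓ) ≤ ENNReal.ofReal (ℓ / 8192))
    {K : ℕ} (hK : 1 ≤ K) (hKℓ : 2 * resRadius c p K / K ≤ ℓ / 8192) (n₀ : ℕ) :
    ∃ k : ℕ, n₀ < k ∧ ∃ v : ℝ,
      Set.Icc v (v + resRadius c p k / 2) ⊆ Set.Icc u (u + ℓ) ∧
      coverMass a b v (v + resRadius c p k / 2) ≤ ENNReal.ofReal (resRadius c p k / 2 / 8192) ∧
      2 * resRadius c p k / k ≤ resRadius c p k / 2 / 8192 ∧
      ∀ x ∈ Set.Icc v (v + resRadius c p k / 2), distZ (x - k * α) ≤ resRadius c p k ∧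
        ∀ z : ℤ, z.natAbs ≤ k → 0 < distZ (x - z * α) ∧
          (K < z.natAbs → guardRadius c p z ≤ distZ (x - z * α)) := by
  obtain ⟨N₁, hN₁⟩ := hα.exists_le_card_fract_mem hu (half_pos hℓ) (by linarith)
  have hexp : Tendsto (fun n : ℕ => (n : ℝ) * Real.exp (-(c * n))) atTop (nhds 0) := by
    have h1 := (Real.tendsto_pow_mul_exp_neg_atTop_nhds_zero 1).comp
      (tendsto_natCast_atTop_atTop.const_mul_atTop hc)
    have h2 := h1.const_mul (1 / c)
    rw [mul_zero] at h2
    refine h2.congr fun n => ?_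
    simp only [Function.comp_apply, pow_one]
    field_simp
  have hD : 0 < 16 * T / ℓ := by positivity
  have e1 := (hexp.eventually (gt_mem_nhds (show (0 : ℝ) < min (1 / 128) (ℓ / 2) by positivity)))
  have e2 := eventually_exp_neg_le_resRadius (c := c) hp hs hps hD
  have e3 := (tendsto_natCast_atTop_atTop (R := ℝ)).eventually_ge_atTop (16 * T / ℓ)
  obtain ⟨N₂, hN₂⟩ := eventually_atTop.1 (e1.and (e2.and e3))
  obtain ⟨N, hN, hN0, hsep⟩ := hα.exists_le_abs_mul_sub (max (max N₁ N₂) (max (max K n₀ + 1) 32768))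
  simp only [max_le_iff] at hN
  obtain ⟨⟨hNN₁, hNN₂⟩, hNKn, hNbig⟩ := hN
  have hNK : K < N := by omega
  have hNn : n₀ < N := by omega
  have hN' : (32768 : ℝ) ≤ N := by exact_mod_cast hNbig
  have hNpos : (0 : ℝ) < N := by linarith
  obtain ⟨h1, h2, h3⟩ := hN₂ N hNN₂
  have hrN := resRadius_le_exp hc hp N
  have hrN1 : N * resRadius c p N ≤ min (1 / 128) (ℓ / 2) :=
    (mul_le_mul_of_nonneg_left hrN hNpos.le).trans h1.le
  have hrσ : resRadius c p N ≤ 1 / (32 * (N : ℝ)) / 4 := by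
    rw [div_div, le_div_iff₀ (by positivity)]
    linarith [hrN1.trans (min_le_left _ _)]
  have hrℓ : resRadius c p N ≤ ℓ / 2 := by
    have := hrN1.trans (min_le_right _ _)
    nlinarith [resRadius_pos c p N]
  have hrhalf : resRadius c p N ≤ 1 / 4 := by
    refine hrσ.trans ?_
    rw [div_div, div_le_div_iff₀ (by positivity) (by positivity)]
    linarith
  set A := (Finset.Ico N (2 * N)).filter
    (fun k : ℕ => Int.fract ((k : ℝ) * α) ∈ Set.Icc u (u + ℓ / 2)) with hA
  have hAmem : ∀ k ∈ A, N ≤ k ∧ k < 2 * N := fun k hk => by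
    simpa using (Finset.mem_filter.1 hk).1
  have hrk : ∀ k ∈ A, resRadius c p k ≤ resRadius c p N := fun k hk =>
    resRadius_antitone hc hp (hAmem k hk).1
  have hsub : ∀ k ∈ A, Set.Icc (Int.fract (k * α) + resRadius c p k / 2)
      (Int.fract (k * α) + resRadius c p k) ⊆ Set.Icc u (u + ℓ) := by
    intro k hk
    obtain ⟨h4, h5⟩ := (Finset.mem_filter.1 hk).2
    have := hrk k hk
    have := resRadius_pos c p k
    exact Set.Icc_subset_Icc (by linarith) (by linarith)
  set W : ℝ := 16 * T / ℓ / N with hWdef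
  have hW : 0 < W := by positivity
  have hW1 : W ≤ 1 := by rw [hWdef, div_le_one hNpos]; exact h3
  obtain ⟨k, hkA, hlong, hguard, hweight⟩ := exists_mem_avoiding (r := resRadius c p) hN0 rfl hsep
    (Finset.filter_subset _ _ : A ⊆ _) hℓ (by linarith [hN₁ N hNN₁])
    (fun k hk => ⟨(resRadius_pos c p k).le, (hrk k hk).trans hrσ⟩) hsub hab hmass
    (Z := intShell K (2 * N)) (by
      intro z hz
      rw [mem_intShell] at hz
      rw [abs_le]
      omega)
    (guardRadius_nonneg c p)
    ((sum_guardRadius_intShell_le hc hp hK (by omega)).trans hKℓ) hw hW (by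
      rw [hWdef]
      apply le_of_eq
      field_simp)
  have hk := hAmem k hkA
  have hkpos := resRadius_pos c p k
  have hkN := hrk k hkA
  have hk' : (32768 : ℝ) ≤ k := by exact_mod_cast hNbig.trans hk.1
  have hend : Int.fract (k * α) + resRadius c p k / 2 + resRadius c p k / 2 =
    Int.fract (k * α) + resRadius c p k := by ring
  refine ⟨k, by omega, Int.fract (k * α) + resRadius c p k / 2, ?_, ?_, ?_, ?_⟩
  · rw [hend]
    exact hsub k hkA
  · rw [hend]
    have h4 : resRadius c p (2 * N) ≤ resRadius c p k := resRadius_antitone hc hp hk.2.le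
    set E := Real.exp (-(W ^ (-1 / s) / 2)) with hE
    calc coverMass a b _ _ ≤ ∑' i, (if (Set.Ioo (a i) (b i) ∩
          Set.Icc (Int.fract (k * α) + resRadius c p k / 2)
            (Int.fract (k * α) + resRadius c p k)).Nonempty then w i else 0) *
            ENNReal.ofReal E := by
          refine ENNReal.tsum_le_tsum fun i => ?_
          by_cases hm : (Set.Ioo (a i) (b i) ∩
            Set.Icc (Int.fract (k * α) + resRadius c p k / 2)
              (Int.fract (k * α) + resRadius c p k)).Nonempty
          · have h5 := (ENNReal.le_tsum i).trans hweight
            simp only [hm, if_true] at h5 ⊢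
            exact hlen i W hW hW1 h5
          · simp [hm]
      _ ≤ ENNReal.ofReal W * ENNReal.ofReal E := by
          rw [ENNReal.tsum_mul_right]
          gcongr
      _ ≤ ENNReal.ofReal (resRadius c p k / 2 / 8192) := by
          rw [← ENNReal.ofReal_mul hW.le]
          refine ENNReal.ofReal_le_ofReal ?_
          have h6 : 0 ≤ E := (Real.exp_pos _).le
          nlinarith
  · rw [div_le_iff₀ (by linarith)]
    nlinarith
  · intro x hx
    rw [hend] at hx
    obtain ⟨hx1, hx2⟩ := hx
    have hxk : ∀ z : ℤ, ∃ m : ℤ, distZ (x - z * α) =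
        |(x - Int.fract (k * α)) + (((k : ℤ) - z : ℤ) * α - m)| := by
      intro z
      refine ⟨⌊k * α⌋ + round (x - z * α), ?_⟩
      rw [distZ]
      congr 1
      simp only [Int.fract]
      push_cast
      ring
    have hself : resRadius c p k / 2 ≤ distZ (x - (k : ℤ) * α) := by
      obtain ⟨m, hm⟩ := hxk k
      rw [hm, sub_self]
      simp only [Int.cast_zero, zero_mul, zero_sub]
      rcases le_or_gt m 0 with hm0 | hm0
      · have : (m : ℝ) ≤ 0 := by exact_mod_cast hm0
        exact le_trans (by linarith) (le_abs_self _)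
      · have : (1 : ℝ) ≤ m := by exact_mod_cast hm0
        exact le_trans (by linarith) (neg_le_abs _)
    refine ⟨?_, fun z hz => ?_⟩
    · refine (distZ_le_abs_sub _ (-⌊k * α⌋)).trans ?_
      have : x - k * α - ((-⌊k * α⌋ : ℤ) : ℝ) = x - Int.fract (k * α) := by
        simp only [Int.fract]
        push_cast
        ring
      rw [this, abs_of_nonneg (by linarith)]
      linarith
    · by_cases hzk : z = k
      · subst hzk
        refine ⟨by linarith, fun _ => le_trans ?_ hself⟩
        rw [guardRadius, Int.natAbs_natCast]
        exact div_le_div_of_nonneg_left hkpos.le (by norm_num) (by nlinarith)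
      · refine ⟨?_, fun hKz => hguard z (mem_intShell.2 ⟨hKz, by omega⟩) hzk x ⟨hx1, hx2⟩⟩
        obtain ⟨m, hm⟩ := hxk z
        have h4 := hsep ((k : ℤ) - z) (by omega) (by rw [abs_le]; omega) m
        rw [hm, abs_pos]
        intro h0
        have h5 : (((k : ℤ) - z : ℤ) : ℝ) * α - m = -(x - Int.fract (k * α)) := by linarith
        rw [h5, abs_neg, abs_of_nonneg (by linarith)] at h4
        have h6 : 0 < 1 / (32 * (N : ℝ)) := by positivity
        linarith

/-- A cover with small total weight misses a point whose approximation by the orbit is governed by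
`resRadius`. -/
lemma Irrational.exists_not_mem_cover {α : ℝ} (hα : Irrational α) {c p s T : ℝ} (hc : 0 < c)
    (hp : 1 ≤ p) (hs : 0 < s) (hps : p * s < 1) (hT : 0 < T)
    {a b : ℕ → ℝ} (hab : ∀ i, a i ≤ b i) {w : ℕ → ℝ≥0∞} (hw : ∑' i, w i ≤ ENNReal.ofReal T)
    (hlen : ∀ i, ∀ W : ℝ, 0 < W → W ≤ 1 → w i ≤ ENNReal.ofReal W →
      ENNReal.ofReal (b i - a i) ≤ w i * ENNReal.ofReal (Real.exp (-(W ^ (-1 / s) / 2))))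
    (hmass : ∑' i, ENNReal.ofReal (b i - a i) ≤ ENNReal.ofReal (1 / 8192)) :
    ∃ x ∈ Set.Icc (0 : ℝ) 1, (∀ i, x ∉ Set.Ioo (a i) (b i)) ∧
      (∃ᶠ k : ℕ in atTop, distZ (x - k * α) ≤ resRadius c p k) ∧
      (∃ K : ℕ, ∀ z : ℤ, K < z.natAbs → guardRadius c p z ≤ distZ (x - z * α)) ∧
      ∀ z : ℤ, 0 < distZ (x - z * α) := by
  let Adm : ℝ × ℝ × ℕ → Prop := fun t => 0 ≤ t.1 ∧ 0 < t.2.1 ∧ t.1 + t.2.1 ≤ 1 ∧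
    coverMass a b t.1 (t.1 + t.2.1) ≤ ENNReal.ofReal (t.2.1 / 8192) ∧ 1 ≤ t.2.2 ∧
    2 * resRadius c p t.2.2 / t.2.2 ≤ t.2.1 / 8192
  let Nxt : ℕ → ℝ × ℝ × ℕ → ℝ × ℝ × ℕ → Prop := fun n t t' => n < t'.2.2 ∧
    Set.Icc t'.1 (t'.1 + t'.2.1) ⊆ Set.Icc t.1 (t.1 + t.2.1) ∧ t'.2.1 ≤ resRadius c p t'.2.2 ∧
    ∀ x ∈ Set.Icc t'.1 (t'.1 + t'.2.1), distZ (x - t'.2.2 * α) ≤ resRadius c p t'.2.2 ∧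
        ∀ z : ℤ, z.natAbs ≤ t'.2.2 → 0 < distZ (x - z * α) ∧
          (t.2.2 < z.natAbs → guardRadius c p z ≤ distZ (x - z * α))
  have hstep : ∀ (t : {t // Adm t}) (n : ℕ), ∃ t' : {t // Adm t}, Nxt n t t' := by
    rintro ⟨⟨u, ℓ, K⟩, hu, hℓ, huℓ, hm, hK, hKℓ⟩ n
    obtain ⟨k, hk, v, hsub, hm', hKk, hx⟩ :=
      hα.exists_next_interval hc hp hs hps hT hab hw hlen hu hℓ huℓ hm hK hKℓ n
    have hpos := resRadius_pos c p k
    have hv := (Set.Icc_subset_Icc_iff (by linarith)).1 hsub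
    refine ⟨⟨⟨v, resRadius c p k / 2, k⟩, ?_⟩, hk, hsub, by simp only; linarith, hx⟩
    exact ⟨hu.trans hv.1, half_pos hpos, hv.2.trans huℓ, hm', by simp only; omega, hKk⟩
  have hinit : Adm (0, 1, 16384) := by
    refine ⟨le_rfl, one_pos, by norm_num, ?_, by norm_num, ?_⟩
    · refine le_trans (ENNReal.tsum_le_tsum fun i => ?_) hmass
      split_ifs
      · exact le_rfl
      · exact zero_le
    · have h1 : resRadius c p 16384 ≤ 1 := Real.exp_le_one_iff.2 (neg_nonpos.2 (by positivity))
      simp only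
      rw [div_le_iff₀ (by norm_num)]
      norm_num
      linarith
  choose next hnext using hstep
  let st : ℕ → {t // Adm t} := fun n => Nat.rec ⟨_, hinit⟩ (fun n t => next t n) n
  have hst : ∀ n, Nxt n (st n).1 (st (n + 1)).1 := fun n => hnext (st n) n
  obtain ⟨x, hx⟩ := IsCompact.nonempty_iInter_of_sequence_nonempty_isCompact_isClosed
    (fun n => Set.Icc (st n).1.1 ((st n).1.1 + (st n).1.2.1)) (fun n => (hst n).2.1)
    (fun n => Set.nonempty_Icc.2 (by linarith [(st n).2.2.1])) isCompact_Icc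
    (fun n => isClosed_Icc)
  rw [Set.mem_iInter] at hx
  have hprop := fun n => (hst n).2.2.2 x (hx (n + 1))
  refine ⟨x, by simpa [st] using hx 0, fun i hxi => ?_, ?_, ⟨16384, fun z hz => ?_⟩, fun z => ?_⟩
  · have hbound : ∀ n : ℕ, b i - a i ≤ Real.exp (-(c * n)) := by
      intro n
      have h1 : ENNReal.ofReal (b i - a i) ≤ ENNReal.ofReal ((st (n + 1)).1.2.1 / 8192) := by
        refine le_trans ?_ (st (n + 1)).2.2.2.2.1
        refine le_trans ?_ (ENNReal.le_tsum i)
        rw [if_pos ⟨x, hxi, hx (n + 1)⟩]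
      have hpos := (st (n + 1)).2.2.1
      rw [ENNReal.ofReal_le_ofReal_iff (by positivity)] at h1
      have h2 := (hst n).2.2.1
      have h3 := resRadius_antitone hc hp (hst n).1.le
      have h4 := resRadius_le_exp hc hp n
      linarith
    have hlim : Tendsto (fun n : ℕ => Real.exp (-(c * n))) atTop (nhds 0) :=
      Real.tendsto_exp_neg_atTop_nhds_zero.comp
        (tendsto_natCast_atTop_atTop.const_mul_atTop hc)
    have h0 := ge_of_tendsto' hlim hbound
    linarith [hxi.1, hxi.2]
  · rw [frequently_atTop]
    exact fun n => ⟨(st (n + 1)).1.2.2, (hst n).1.le, (hprop n).1⟩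
  · have hind : ∀ n, z.natAbs ≤ (st n).1.2.2 → guardRadius c p z ≤ distZ (x - z * α) := by
      intro n
      induction n with
      | zero => exact fun h => absurd hz (not_lt.2 h)
      | succ n ih =>
        intro h
        rcases le_or_gt z.natAbs (st n).1.2.2 with h1 | h1
        · exact ih h1
        · exact ((hprop n).2 z h).2 h1
    exact hind (z.natAbs + 1) (hst z.natAbs).1.le
  · exact ((hprop z.natAbs).2 z (hst z.natAbs).1.le).1

lemma resStrength_eq_of_tendsto {α x c p : ℝ} {δ : ℝ≥0∞}
    (hlim : Tendsto (fun n : ℕ => ENNReal.ofReal (c * (n : ℝ) ^ p / n)) atTop (nhds δ))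
    (hfreq : ∃ᶠ k : ℕ in atTop, distZ (x - k * α) ≤ resRadius c p k)
    (hguard : ∃ K : ℕ, ∀ z : ℤ, K < z.natAbs → guardRadius c p z ≤ distZ (x - z * α))
    (hpos : ∀ z : ℤ, 0 < distZ (x - z * α)) : resStrength α x = δ := by
  have horb : ¬ ∃ k m : ℤ, x = (k : ℝ) * α + (m : ℝ) := by
    rintro ⟨k, m, hkm⟩
    have h1 := distZ_le_abs_sub (x - k * α) m
    rw [show x - k * α - m = 0 by linarith, abs_zero] at h1
    exact absurd (hpos k) (not_lt.2 h1)
  rw [resStrength, if_neg horb]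
  refine le_antisymm ?_ ?_
  · obtain ⟨K, hK⟩ := hguard
    have hnat : Tendsto Int.natAbs cofinite atTop := by
      rw [← Nat.cofinite_eq_atTop]
      refine Tendsto.cofinite_of_finite_preimage_singleton fun n => ?_
      refine (Set.toFinite {(n : ℤ), -(n : ℤ)}).subset fun z hz => ?_
      have : z.natAbs = n := hz
      simp only [Set.mem_insert_iff, Set.mem_singleton_iff]
      omega
    have hlog : Tendsto (fun n : ℕ => ENNReal.ofReal (2 * Real.log n / n)) atTop (nhds 0) := by
      have h1 := (Real.isLittleO_log_id_atTop.tendsto_div_nhds_zero.comp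
        (tendsto_natCast_atTop_atTop (R := ℝ))).const_mul 2
      rw [mul_zero] at h1
      have h2 := ENNReal.tendsto_ofReal h1
      rw [ENNReal.ofReal_zero] at h2
      refine h2.congr fun n => ?_
      simp only [Function.comp_apply, id]
      rw [mul_div_assoc]
    have hsum := (hlim.add hlog).comp hnat
    rw [add_zero] at hsum
    rw [← hsum.limsup_eq]
    refine limsup_le_limsup ?_
    filter_upwards [hnat.eventually_gt_atTop K, hnat.eventually_ge_atTop 1] with z hz hz1
    simp only [Function.comp_apply]
    refine le_trans (ENNReal.ofReal_le_ofReal ?_) ENNReal.ofReal_add_le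
    have hn : (0 : ℝ) < z.natAbs := by exact_mod_cast hz1
    have hcast : |(z : ℝ)| = z.natAbs := by rw [Nat.cast_natAbs, Int.cast_abs]
    rw [hcast, ← add_div]
    refine div_le_div_of_nonneg_right ?_ hn.le
    have h1 := Real.log_le_log (div_pos (resRadius_pos c p _) (pow_pos hn 2)) (hK z hz)
    rw [Real.log_div (resRadius_pos c p _).ne' (pow_pos hn 2).ne', resRadius, Real.log_exp,
      Real.log_pow] at h1
    push_cast at h1
    linarith
  · refine le_of_forall_lt fun d hd => ?_
    obtain ⟨e, hde, heδ⟩ := exists_between hd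
    refine hde.trans_le (le_limsup_of_frequently_le ?_)
    have h1 := (hfreq.and_eventually (hlim.eventually (lt_mem_nhds heδ))).and_eventually
      (eventually_ge_atTop 1)
    refine (Nat.cast_injective (R := ℤ)).tendsto_cofinite.frequently ?_
    rw [Nat.cofinite_eq_atTop]
    refine h1.mono fun k hk => ?_
    obtain ⟨⟨hk, hke⟩, hk1⟩ := hk
    have hk0 : (0 : ℝ) < k := by exact_mod_cast hk1
    refine hke.le.trans (ENNReal.ofReal_le_ofReal ?_)
    have h2 := Real.log_le_log (hpos k) hk
    rw [resRadius, Real.log_exp] at h2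
    simp only [Int.cast_natCast, Nat.abs_cast] at h2 ⊢
    exact div_le_div_of_nonneg_right (by linarith) hk0.le

lemma le_omegaS_mul_exp {s r Y : ℝ} (hs : s ≤ 1) (hr0 : 0 ≤ r)
    (hr : r ≤ Real.exp (-1)) (hY : 0 < r → Y ≤ -Real.log r) :
    r ≤ omegaS s r * Real.exp (-(Y / 2)) := by
  rcases hr0.eq_or_lt with rfl | hr0
  · simp [omegaS]
  have hy1 : 1 ≤ -Real.log r := by
    have := Real.log_le_log hr0 hr
    rw [Real.log_exp] at this
    linarith
  have hY' := hY hr0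
  rw [omegaS, if_pos hr0]
  have hexp : r = Real.exp (-(-Real.log r)) := by rw [neg_neg, Real.exp_log hr0]
  generalize -Real.log r = y at *
  have hy0 : 0 < y := by linarith
  have h1 : y ^ s ≤ Real.exp (y / 2) := by
    have h2 : y ^ s ≤ y := by
      simpa using Real.rpow_le_rpow_of_exponent_le hy1 hs
    have h3 := Real.add_one_le_exp (y / 4)
    have h4 : Real.exp (y / 2) = Real.exp (y / 4) ^ 2 := by
      rw [← Real.exp_nat_mul]
      congr 1
      push_cast
      ring
    nlinarith [sq_nonneg (y / 4 - 1)]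
  have h2 : Real.exp (-(y / 2)) ≤ y ^ (-s) := by
    rw [Real.exp_neg, Real.rpow_neg hy0.le]
    exact inv_anti₀ (Real.rpow_pos_of_pos hy0 s) h1
  calc r = Real.exp (-(y / 2)) * Real.exp (-(y / 2)) := by
        rw [hexp, ← Real.exp_add]
        congr 1
        ring
    _ ≤ y ^ (-s) * Real.exp (-(Y / 2)) := by
        gcongr

lemma rpow_neg_one_div_le_neg_log {s r W : ℝ} (hs : 0 < s) (hr0 : 0 < r)
    (hr : r < 1) (hW : omegaS s r ≤ W) : W ^ (-1 / s) ≤ -Real.log r := by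
  have hy : 0 < -Real.log r := neg_pos.2 (Real.log_neg hr0 hr)
  rw [omegaS, if_pos hr0] at hW
  have h1 := Real.rpow_le_rpow_of_nonpos (Real.rpow_pos_of_pos hy (-s)) hW
    (show -1 / s ≤ 0 from div_nonpos_of_nonpos_of_nonneg (by norm_num) hs.le)
  rwa [← Real.rpow_mul hy.le, show -s * (-1 / s) = 1 by field_simp, Real.rpow_one] at h1

lemma exists_tendsto_ofReal_mul_rpow_div {δ : ℝ≥0∞} (hδ : 0 < δ) {s : ℝ} (hs : 0 < s)
    (hs1 : s < 1) : ∃ c p : ℝ, 0 < c ∧ 1 ≤ p ∧ p * s < 1 ∧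
      Tendsto (fun n : ℕ => ENNReal.ofReal (c * (n : ℝ) ^ p / n)) atTop (nhds δ) := by
  rcases eq_or_ne δ ⊤ with rfl | hδt
  · have hp : 1 < (1 + 1 / s) / 2 := by
      have : 1 < 1 / s := by rwa [lt_div_iff₀ hs, one_mul]
      linarith
    refine ⟨1, (1 + 1 / s) / 2, one_pos, hp.le, ?_, ?_⟩
    · have : (1 + 1 / s) / 2 * s = (s + 1) / 2 := by field_simp
      linarith
    · have h1 := (tendsto_rpow_atTop (sub_pos.2 hp)).comp (tendsto_natCast_atTop_atTop (R := ℝ))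
      refine (ENNReal.tendsto_ofReal_atTop.comp h1).congr' ?_
      filter_upwards [eventually_ge_atTop 1] with n hn
      have hn0 : (n : ℝ) ≠ 0 := by exact_mod_cast (by omega : n ≠ 0)
      simp only [Function.comp_apply, one_mul]
      rw [Real.rpow_sub_one hn0]
  · refine ⟨δ.toReal, 1, ENNReal.toReal_pos hδ.ne' hδt, le_rfl, by linarith, ?_⟩
    refine tendsto_const_nhds.congr' ?_
    filter_upwards [eventually_ge_atTop 1] with n hn
    have hn0 : (n : ℝ) ≠ 0 := by exact_mod_cast (by omega : n ≠ 0)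
    rw [Real.rpow_one, mul_div_cancel_right₀ _ hn0, ENNReal.ofReal_toReal hδt]

/-- Below the critical exponent the gauge measure of every resonance level set is infinite. -/
lemma gaugeHaus_resSet_eq_top {α : ℝ} (hα : Irrational α) {δ : ℝ≥0∞} (hδ : 0 < δ) {s : ℝ}
    (hs : 0 < s) (hs1 : s < 1) : gaugeHaus (omegaS s) (resSet α δ) = ⊤ := by
  by_contra hfin
  obtain ⟨c, p, hc, hp, hps, hlim⟩ := exists_tendsto_ofReal_mul_rpow_div hδ hs hs1
  set T : ℝ := (gaugeHaus (omegaS s) (resSet α δ)).toReal + 1 with hTdef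
  have hT : 0 < T := by positivity
  have hHT : gaugeHaus (omegaS s) (resSet α δ) < ENNReal.ofReal T := by
    rw [ENNReal.lt_ofReal_iff_toReal_lt hfin]
    linarith
  set Y : ℝ := max 1 (2 * Real.log (8192 * T)) with hY
  have hYT : T * Real.exp (-(Y / 2)) ≤ 1 / 8192 := by
    have h1 : Real.log (8192 * T) ≤ Y / 2 := by linarith [le_max_right 1 (2 * Real.log (8192 * T))]
    have h2 := Real.exp_le_exp.2 h1
    rw [Real.exp_log (by positivity)] at h2
    rw [Real.exp_neg, ← div_eq_mul_inv, div_le_div_iff₀ (Real.exp_pos _) (by norm_num)]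
    linarith
  have h1 := (le_iSup₂ (f := fun (ε : ℝ) (_ : 0 < ε) =>
    ⨅ (a : ℕ → ℝ) (b : ℕ → ℝ) (_ : resSet α δ ⊆ ⋃ i, Set.Ioo (a i) (b i))
      (_ : ∀ i, a i ≤ b i ∧ b i - a i ≤ ε),
      ∑' i, ENNReal.ofReal (omegaS s (b i - a i))) (Real.exp (-Y)) (Real.exp_pos _)).trans_lt hHT
  simp only [iInf_lt_iff] at h1
  obtain ⟨a, b, hcov, hab, hw⟩ := h1
  have hlen0 : ∀ i, 0 ≤ b i - a i := fun i => sub_nonneg.2 (hab i).1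
  have hlen1 : ∀ i, b i - a i ≤ Real.exp (-1) := fun i =>
    (hab i).2.trans (Real.exp_le_exp.2 (neg_le_neg (le_max_left _ _)))
  have he1 : Real.exp (-1) < 1 := by
    rw [Real.exp_lt_one_iff]
    norm_num
  have hω : ∀ i, 0 ≤ omegaS s (b i - a i) := fun i => omegaS_nonneg ((hlen1 i).trans he1.le)
  obtain ⟨x, hx01, hxcov, hfreq, hguard, hpos⟩ := hα.exists_not_mem_cover hc hp hs hps hT
    (fun i => (hab i).1) (w := fun i => ENNReal.ofReal (omegaS s (b i - a i))) hw.le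
    (fun i W hW _ hWi => by
      rw [ENNReal.ofReal_le_ofReal_iff hW.le] at hWi
      rw [← ENNReal.ofReal_mul (hω i)]
      exact ENNReal.ofReal_le_ofReal (le_omegaS_mul_exp hs1.le (hlen0 i) (hlen1 i) fun h =>
        rpow_neg_one_div_le_neg_log hs h ((hlen1 i).trans_lt he1) hWi))
    (by
      calc ∑' i, ENNReal.ofReal (b i - a i)
          ≤ ∑' i, ENNReal.ofReal (omegaS s (b i - a i)) * ENNReal.ofReal (Real.exp (-(Y / 2))) := by
            refine ENNReal.tsum_le_tsum fun i => ?_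
            rw [← ENNReal.ofReal_mul (hω i)]
            refine ENNReal.ofReal_le_ofReal (le_omegaS_mul_exp hs1.le (hlen0 i) (hlen1 i) fun h => ?_)
            have := Real.log_le_log h (hab i).2
            rw [Real.log_exp] at this
            linarith
        _ ≤ ENNReal.ofReal T * ENNReal.ofReal (Real.exp (-(Y / 2))) := by
            rw [ENNReal.tsum_mul_right]
            gcongr
        _ ≤ ENNReal.ofReal (1 / 8192) := by
            rw [← ENNReal.ofReal_mul hT.le]
            exact ENNReal.ofReal_le_ofReal hYT)
  have hxS : x ∈ resSet α δ := ⟨hx01, resStrength_eq_of_tendsto hlim hfreq hguard hpos⟩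
  obtain ⟨i, hi⟩ := Set.mem_iUnion.1 (hcov hxS)
  exact hxcov i hi

lemma gaugeHaus_le_of_covers {ι : Type*} [Countable ι] [Infinite ι] {ω : ℝ → ℝ} {S : Set ℝ}
    {M : ℝ≥0∞}
    (h : ∀ ε : ℝ, 0 < ε → ∃ y ρ : ι → ℝ, (S ⊆ ⋃ i, Set.Ioo (y i - ρ i) (y i + ρ i)) ∧
      (∀ i, 0 ≤ ρ i ∧ 2 * ρ i ≤ ε) ∧ ∑' i, ENNReal.ofReal (ω (2 * ρ i)) ≤ M) :
    gaugeHaus ω S ≤ M := by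
  obtain ⟨e⟩ := nonempty_equiv_of_countable (α := ℕ) (β := ι)
  refine iSup₂_le fun ε hε => ?_
  obtain ⟨y, ρ, hcov, hρ, hsum⟩ := h ε hε
  have h2 : ∀ i, y (e i) + ρ (e i) - (y (e i) - ρ (e i)) = 2 * ρ (e i) := fun i => by ring
  refine iInf_le_of_le (fun i => y (e i) - ρ (e i)) (iInf_le_of_le (fun i => y (e i) + ρ (e i))
    (iInf_le_of_le ?_ (iInf_le_of_le ?_ ?_)))
  · intro x hx
    obtain ⟨i, hi⟩ := Set.mem_iUnion.1 (hcov hx)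
    exact Set.mem_iUnion.2 ⟨e.symm i, by simpa using hi⟩
  · intro i
    rw [h2]
    exact ⟨by linarith [(hρ (e i)).1], (hρ (e i)).2⟩
  · simp_rw [h2]
    rwa [e.tsum_eq (fun i => ENNReal.ofReal (ω (2 * ρ i)))]

/-- A point of positive resonance strength lies on the orbit of `0`, or is exponentially close to
the orbit infinitely often. -/
lemma exists_abs_sub_lt_of_lt_resStrength {α x d : ℝ} (hd : 0 < d)
    (h : ENNReal.ofReal d < resStrength α x) :
    (∃ k m : ℤ, x = k * α + m) ∨
      ∀ K : ℕ, ∃ k m : ℤ, K ≤ k.natAbs ∧ |x - k * α - m| < Real.exp (-(d * k.natAbs)) := by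
  rw [resStrength] at h
  split_ifs at h with horb
  · exact Or.inl horb
  refine Or.inr fun K => ?_
  have h1 := frequently_lt_of_lt_limsup (by isBoundedDefault) h
  have h2 : ∀ᶠ k : ℤ in cofinite, k ∉ Finset.Icc (-(K : ℤ)) K :=
    (Finset.finite_toSet _).compl_mem_cofinite
  obtain ⟨k, hk, hkK⟩ := (h1.and_eventually h2).exists
  rw [Finset.mem_Icc] at hkK
  have hk0 : (0 : ℝ) < k.natAbs := by exact_mod_cast (by omega : 0 < k.natAbs)
  refine ⟨k, round (x - k * α), by omega, ?_⟩
  rw [ENNReal.ofReal_lt_ofReal_iff_of_nonneg hd.le,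
    show |(k : ℝ)| = k.natAbs by rw [Nat.cast_natAbs, Int.cast_abs], lt_div_iff₀ hk0] at hk
  change distZ (x - k * α) < _
  rcases (distZ_nonneg (x - k * α)).eq_or_lt with h0 | h0
  · rw [← h0]
    exact Real.exp_pos _
  · rw [← Real.log_lt_iff_lt_exp h0]
    linarith

/-- Above the critical exponent the gauge measure of every resonance level set is finite. -/
lemma gaugeHaus_resSet_lt_top (α : ℝ) {δ : ℝ≥0∞} (hδ : 0 < δ) {s : ℝ} (hs : 1 < s) :
    gaugeHaus (omegaS s) (resSet α δ) < ⊤ := by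
  obtain ⟨d', hd0', hdδ'⟩ := ENNReal.lt_iff_exists_nnreal_btwn.1 hδ
  obtain ⟨d, hd, hdδ⟩ : ∃ d : ℝ, 0 < d ∧ ENNReal.ofReal d < δ :=
    ⟨d', by exact_mod_cast hd0', by rwa [ENNReal.ofReal_coe_nnreal]⟩
  have hsumm : Summable (fun n : ℕ => (d / 2 * ((n + 1 : ℕ) : ℝ)) ^ (-s)) := by
    have h1 := ((summable_nat_add_iff 1).2 (Real.summable_nat_rpow.2 (by linarith : -s < -1)))
    refine (h1.mul_left ((d / 2) ^ (-s))).congr fun n => ?_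
    rw [Real.mul_rpow (by positivity) (by positivity)]
  set M : ℝ≥0∞ := ∑' i : ℕ × (Fin 3 × Bool × Bool),
    ENNReal.ofReal ((d / 2 * ((i.1 + 1 : ℕ) : ℝ)) ^ (-s)) with hM
  have hMtop : M < ⊤ := by
    rw [hM, ENNReal.tsum_prod']
    simp only [tsum_fintype, Finset.sum_const, nsmul_eq_mul]
    rw [ENNReal.tsum_mul_left]
    exact ENNReal.mul_lt_top (ENNReal.natCast_lt_top _) hsumm.tsum_ofReal_lt_top
  refine lt_of_le_of_lt (gaugeHaus_le_of_covers (ι := ℕ × (Fin 3 × Bool × Bool)) ?_) hMtop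
  intro ε hε
  obtain ⟨K, hK⟩ := exists_nat_ge (max ((1 + d) / d) (Real.log (2 / ε) / d))
  have hK1 : 1 + d ≤ d * K := by
    have := (le_max_left _ _).trans hK
    rw [div_le_iff₀ hd] at this
    linarith
  have hK2 : Real.log (2 / ε) ≤ d * K := by
    have := (le_max_right _ _).trans hK
    rw [div_le_iff₀ hd] at this
    linarith
  let idx : ℕ × (Fin 3 × Bool × Bool) → ℤ := fun i =>
    let n : ℕ := if i.2.2.1 then K + i.1 else i.1
    if i.2.2.2 then n else -n
  let y : ℕ × (Fin 3 × Bool × Bool) → ℝ := fun i =>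
    Int.fract (idx i * α) + ((i.2.1 : ℕ) - 1)
  let ρ : ℕ × (Fin 3 × Bool × Bool) → ℝ := fun i => Real.exp (-(d * (K + i.1 : ℕ)))
  have hρ1 : ∀ n : ℕ, Real.exp (-(d * (K + n : ℕ))) < 1 := by
    intro n
    rw [Real.exp_lt_one_iff]
    push_cast
    nlinarith [mul_nonneg hd.le (Nat.cast_nonneg (α := ℝ) n)]
  have hmem : ∀ x ∈ Set.Icc (0 : ℝ) 1, ∀ (n : ℕ) (k m : ℤ) (o : Bool),
      k.natAbs = (if o then K + n else n) →
      |x - k * α - m| < Real.exp (-(d * (K + n : ℕ))) →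
      x ∈ ⋃ i, Set.Ioo (y i - ρ i) (y i + ρ i) := by
    intro x hx n k m o hk hkm
    have h1 : x - k * α - m = x - Int.fract (k * α) - ((m + ⌊k * α⌋ : ℤ) : ℝ) := by
      simp only [Int.fract]
      push_cast
      ring
    rw [h1] at hkm
    generalize m + ⌊k * α⌋ = j at hkm
    have hf0 := Int.fract_nonneg (k * α)
    have hf1 := Int.fract_lt_one (k * α)
    rw [abs_lt] at hkm
    have hρn := hρ1 n
    have hj1 : (j : ℝ) < 2 := by linarith [hx.2]
    have hj2 : (-2 : ℝ) < j := by linarith [hx.1]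
    have hj1' : j < 2 := by exact_mod_cast hj1
    have hj2' : -2 < j := by exact_mod_cast hj2
    let q : Fin 3 := ⟨(j + 1).toNat, by omega⟩
    have hq : (((q : Fin 3) : ℕ) : ℝ) - 1 = j := by
      have h2 : (((j + 1).toNat : ℕ) : ℤ) = j + 1 := Int.toNat_of_nonneg (by omega)
      have h3 : (((j + 1).toNat : ℕ) : ℝ) = j + 1 := by exact_mod_cast h2
      change (((j + 1).toNat : ℕ) : ℝ) - 1 = j
      linarith
    refine Set.mem_iUnion.2 ⟨(n, q, o, decide (0 ≤ k)), ?_⟩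
    have hidx : idx (n, q, o, decide (0 ≤ k)) = k := by
      simp only [idx, ← hk, decide_eq_true_eq]
      split_ifs <;> omega
    simp only [y, ρ, hidx, hq]
    constructor <;> linarith [hkm.1, hkm.2]
  refine ⟨y, ρ, ?_, fun i => ⟨(Real.exp_pos _).le, ?_⟩, ?_⟩
  · rintro x ⟨hx01, hxδ⟩
    rw [← hxδ] at hdδ
    rcases exists_abs_sub_lt_of_lt_resStrength hd hdδ with ⟨k, m, hkm⟩ | hclose
    · refine hmem x hx01 k.natAbs k m false (by simp) ?_
      rw [show x - k * α - m = 0 by linarith, abs_zero]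
      exact Real.exp_pos _
    · obtain ⟨k, m, hkK, hkm⟩ := hclose K
      refine hmem x hx01 (k.natAbs - K) k m true (by simp; omega) ?_
      rwa [Nat.add_sub_cancel' hkK]
  · have h1 : d * K ≤ d * (K + i.1 : ℕ) := by
      push_cast
      nlinarith [mul_nonneg hd.le (Nat.cast_nonneg (α := ℝ) i.1)]
    have h2 := Real.exp_le_exp.2 (hK2.trans h1)
    rw [Real.exp_log (by positivity), div_le_iff₀ hε] at h2
    simp only [ρ]
    rw [Real.exp_neg, ← div_eq_mul_inv, div_le_iff₀ (Real.exp_pos _)]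
    linarith
  · refine ENNReal.tsum_le_tsum fun i => ENNReal.ofReal_le_ofReal ?_
    have hρpos : 0 < 2 * ρ i := mul_pos two_pos (Real.exp_pos _)
    rw [omegaS, if_pos hρpos]
    refine Real.rpow_le_rpow_of_nonpos (by positivity) ?_ (by linarith)
    rw [Real.log_mul two_ne_zero (Real.exp_pos _).ne', Real.log_exp]
    have hlog2 : Real.log 2 < 1 := by
      have := Real.log_two_lt_d9
      linarith
    push_cast
    nlinarith [mul_nonneg hd.le (Nat.cast_nonneg (α := ℝ) i.1)]

/-- For irrational `α ∈ [0,1]` and `0 < δ ≤ ∞`, the log-Hausdorff dimension of the exact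
resonance level set `D(δ)` equals `1`. -/
theorem logHausDim_resSet_eq_one (α : ℝ) (hα : Irrational α)
    (hα01 : α ∈ Set.Icc (0 : ℝ) 1) (δ : ℝ≥0∞) (hδ : 0 < δ) :
    logHausDim (resSet α δ) = 1 := by
  have hmem : ∀ s : ℝ, 1 < s → s ∈ {s : ℝ | 0 < s ∧ gaugeHaus (omegaS s) (resSet α δ) < ⊤} :=
    fun s hs => ⟨by linarith, gaugeHaus_resSet_lt_top α hδ hs⟩
  refine le_antisymm (le_of_forall_gt_imp_ge_of_dense fun s hs => ?_) ?_
  · exact csInf_le ⟨0, fun t ht => ht.1.le⟩ (hmem s hs)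
  · refine le_csInf ⟨2, hmem 2 (by norm_num)⟩ fun s hs => ?_
    by_contra! hs1
    exact hs.2.ne (gaugeHaus_resSet_eq_top hα hδ hs.1 hs1)
end
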